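/- arXiv:1805.11871 — 4 statements merged into one kernel-verified Lean document; each statement's English description precedes it below -/
import Mathlib

section
/- Suppose a simplex Δ (the standard (n-1)-simplex in ℝⁿ) is covered by closed sets C₁, ..., Cₙ such that for every nonempty subset I ⊆ {1,...,n}, the face of Δ spanned by the vertices {eᵢ : i ∈ I} is contained in ⋃_{i ∈ I} Cᵢ. Then ⋂_{i=1}^{n} Cᵢ is nonempty. -/
namespace KKMAux

open Finset

section Comb

variable {X ι : Type*} [Fintype X] [DecidableEq X] [Fintype ι] [DecidableEq ι]

/-- Dominant sets in Scarf's sense. -/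
def Dom (u : ι → X → ℕ) (S : Finset X) : Prop := ∀ y, ∃ i, ∀ x ∈ S, u i y ≤ u i x

lemma Dom.mono {u : ι → X → ℕ} {R S : Finset X} (h : Dom u S) (hRS : R ⊆ S) : Dom u R := by
  intro y
  obtain ⟨i, hi⟩ := h y
  exact ⟨i, fun x hx => hi x (hRS hx)⟩

/-- If `R ⊆ S` and `S` has one more element then `S = insert x R`. -/
lemma exists_insert {α : Type*} [DecidableEq α] {R S : Finset α} (h : R ⊆ S)
    (hc : R.card + 1 = S.card) : ∃ x, x ∉ R ∧ S = insert x R := by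
  have h1 : (S \ R).card = 1 := by
    rw [card_sdiff_of_subset h]; omega
  obtain ⟨x, hx⟩ := card_eq_one.1 h1
  have hx' : x ∈ S \ R := by rw [hx]; simp
  refine ⟨x, (mem_sdiff.1 hx').2, ?_⟩
  rw [insert_eq, ← hx, sdiff_union_of_subset h]

/-- Non-colorful rooms have an even number of doors. -/
lemma doors_even (c : X → ι) (i0 : ι) (S : Finset X) (hS : S.card = Fintype.card ι)
    (hcol : S.image c ≠ univ) (D : Finset (Finset X))
    (hD : ∀ R, R ∈ D ↔ (R ⊆ S ∧ R.card + 1 = Fintype.card ι ∧ R.image c = univ.erase i0)) :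
    Even D.card := by
  have hinj : ∀ R ∈ D, Set.InjOn c R := by
    intro R hR
    obtain ⟨h1, h2, h3⟩ := (hD R).1 hR
    apply card_image_iff.1
    rw [h3, card_erase_of_mem (mem_univ _), card_univ]
    omega
  rcases D.eq_empty_or_nonempty with h | ⟨R, hR⟩
  · simp [h]
  obtain ⟨h1, h2, h3⟩ := (hD R).1 hR
  obtain ⟨x, hxR, rfl⟩ := exists_insert h1 (by omega)
  have hcx : c x ≠ i0 := by
    intro h
    apply hcol
    rw [image_insert, h3, h]
    simp
  have hcx' : c x ∈ R.image c := by rw [h3]; simp [hcx]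
  obtain ⟨x', hx', hxx'⟩ := mem_image.1 hcx'
  have hne : x ≠ x' := by rintro rfl; exact hxR hx'
  have : D = {R, (insert x R).erase x'} := by
    ext R'
    constructor
    · intro hR'
      obtain ⟨k1, k2, k3⟩ := (hD R').1 hR'
      obtain ⟨z, hz, hz'⟩ := exists_insert k1 (by omega)
      have hR'e : R' = (insert x R).erase z := by rw [hz', erase_insert hz]
      by_cases hzx : z = x
      · subst hzx
        rw [hR'e, erase_insert hxR]; simp
      by_cases hzx' : z = x'
      · subst hzx'
        rw [hR'e]; simp
      exfalso
      have a1 : x ∈ R' := by rw [hR'e]; simp [Ne.symm hzx]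
      have a2 : x' ∈ R' := by rw [hR'e]; simp [Ne.symm hzx', hx']
      exact hne (hinj R' hR' a1 a2 hxx'.symm)
    · intro h
      rw [mem_insert, mem_singleton] at h
      rcases h with rfl | rfl
      · exact hR
      rw [hD]
      refine ⟨erase_subset _ _, ?_, ?_⟩
      · rw [card_erase_of_mem (by simp [hx'])]
        omega
      · rw [← h3]
        ext i
        simp only [mem_image, mem_erase, mem_insert]
        constructor
        · rintro ⟨w, ⟨hw1, rfl | hw2⟩, rfl⟩
          · exact ⟨x', hx', hxx'⟩
          · exact ⟨w, hw2, rfl⟩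
        · rintro ⟨w, hw, rfl⟩
          by_cases hwx : w = x'
          · exact ⟨x, ⟨hne, Or.inl rfl⟩, by rw [hwx, hxx']⟩
          · exact ⟨w, ⟨hwx, Or.inr hw⟩, rfl⟩
  rw [this, card_pair]
  · exact even_two
  · intro h
    apply hxR
    rw [h]
    simp [hne]

/-- Inner doors lie in an even number of rooms. -/
lemma rooms_even (u : ι → X → ℕ) (hu : ∀ i, Function.Injective (u i)) (s : ι → X)
    (h2 : ∀ i j, j ≠ i → ∀ x, x ∉ Set.range s → u i x < u i (s j))
    (R : Finset X) (hR : R.card + 1 = Fintype.card ι) (t : X) (htR : t ∈ R)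
    (ht : t ∉ Set.range s) (D : Finset (Finset X))
    (hD : ∀ S, S ∈ D ↔ (R ⊆ S ∧ S.card = Fintype.card ι ∧ Dom u S)) :
    Even D.card := by
  rcases D.eq_empty_or_nonempty with h | ⟨S0, hS0⟩
  · simp [h]
  have hdom : Dom u R := ((hD S0).1 hS0).2.2.mono ((hD S0).1 hS0).1
  clear hS0 S0
  have hp : ∀ i, ∃ p ∈ R, ∀ x ∈ R, u i p ≤ u i x := fun i => exists_min_image R (u i) ⟨t, htR⟩
  choose p hpR hpm using hp
  have hsurj : ∀ x ∈ R, ∃ i, p i = x := by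
    intro x hx
    obtain ⟨i, hi⟩ := hdom x
    exact ⟨i, hu i (le_antisymm (hpm i x hx) (hi _ (hpR i)))⟩
  obtain ⟨a, -, b, -, hab, hpab⟩ : ∃ a ∈ (univ : Finset ι), ∃ b ∈ (univ : Finset ι),
      a ≠ b ∧ p a = p b :=
    exists_ne_map_eq_of_card_lt_of_maps_to (by rw [card_univ]; omega) (fun i _ => hpR i)
  have hsurj' : ∀ a b, a ≠ b → p a = p b → ∀ x ∈ R, ∃ i, i ≠ a ∧ p i = x := by
    intro a b hab hpab x hx
    obtain ⟨i, hi⟩ := hsurj x hx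
    by_cases h : i = a
    · subst h
      exact ⟨b, hab.symm, by rw [← hpab, hi]⟩
    · exact ⟨i, h, hi⟩
  have hinj : ∀ a b, a ≠ b → p a = p b → Set.InjOn p (univ.erase a : Finset ι) := by
    intro a b hab hpab
    apply card_image_iff.1
    have : (univ.erase a).image p = R := by
      ext x
      simp only [mem_image, mem_erase, mem_univ, and_true]
      constructor
      · rintro ⟨i, -, rfl⟩; exact hpR i
      · exact hsurj' a b hab hpab x
    rw [this, card_erase_of_mem (mem_univ _), card_univ]
    omega
  have hcoll : ∀ i j, i ≠ j → p i = p j → (i = a ∧ j = b) ∨ (i = b ∧ j = a) := by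
    intro i j hij hpij
    have q1 : i = a ∨ j = a := by
      by_contra! h
      exact hij (hinj a b hab hpab (by simp [h.1]) (by simp [h.2]) hpij)
    have q2 : i = b ∨ j = b := by
      by_contra! h
      exact hij (hinj b a hab.symm hpab.symm (by simp [h.1]) (by simp [h.2]) hpij)
    grind
  -- the extremal points
  have hex : ∀ a, ∃ x, (∀ j, j ≠ a → u j (p j) < u j x) ∧
      ∀ y, (∀ j, j ≠ a → u j (p j) < u j y) → u a y ≤ u a x := by
    intro a
    obtain ⟨x, hx, hx'⟩ := exists_max_image
      (univ.filter (fun x => ∀ j, j ≠ a → u j (p j) < u j x)) (u a)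
      ⟨s a, by
        simp only [mem_filter, mem_univ, true_and]
        intro j hj
        exact lt_of_le_of_lt (hpm j t htR) (h2 j a hj.symm t ht)⟩
    simp only [mem_filter, mem_univ, true_and] at hx hx'
    exact ⟨x, hx, hx'⟩
  choose e he hemax using hex
  -- backwards
  have hback : ∀ a b, a ≠ b → p a = p b → e a ∉ R ∧ Dom u (insert (e a) R) := by
    intro a b hab hpab
    refine ⟨?_, ?_⟩
    · intro h
      obtain ⟨i, hia, hi⟩ := hsurj' a b hab hpab _ h
      have := he a i hia
      rw [hi] at this
      exact lt_irrefl _ this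
    · intro y
      by_contra! hy
      have hyM : ∀ j, j ≠ a → u j (p j) < u j y := by
        intro j hj
        obtain ⟨z, hz, hzy⟩ := hy j
        rcases mem_insert.1 hz with rfl | hz
        · exact (he a j hj).trans hzy
        · exact (hpm j z hz).trans_lt hzy
      have hya := hemax a y hyM
      obtain ⟨i, hi⟩ := hdom y
      by_cases hia : i = a
      · subst hia
        obtain ⟨z, hz, hzy⟩ := hy i
        rcases mem_insert.1 hz with rfl | hz
        · omega
        · have := hi z hz
          omega
      · have := hyM i hia
        have := hi _ (hpR i)
        omega
  have hforw : ∀ a b, a ≠ b → (∀ i j, i ≠ j → p i = p j → (i = a ∧ j = b) ∨ (i = b ∧ j = a)) →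
      ∀ x, x ∉ R → Dom u (insert x R) → u a x < u a (p a) → x = e a := by
    intro a b hab hcoll x hx hd hxa
    have key : ∀ i, u i x < u i (p i) → ∃ j, j ≠ i ∧ p j = p i ∧ u j (p j) ≤ u j x := by
      intro i hi
      obtain ⟨j, hj⟩ := hd (p i)
      have e1 : p j = p i :=
        hu j (le_antisymm (hpm j _ (hpR i)) (hj _ (mem_insert_of_mem (hpR j))))
      have e2 := hj x (mem_insert_self _ _)
      refine ⟨j, ?_, e1, by rw [e1]; exact e2⟩
      rintro rfl
      omega
    have hM : ∀ j, j ≠ a → u j (p j) < u j x := by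
      intro j hj
      by_contra! h
      have hlt : u j x < u j (p j) := by
        refine lt_of_le_of_ne h ?_
        intro h'
        apply hx
        rw [hu j h']
        exact hpR j
      obtain ⟨k, hk, hk1, hk2⟩ := key j hlt
      have := hcoll k j hk hk1
      have hka : k = a := by grind
      subst hka
      omega
    apply hu a
    apply le_antisymm (hemax a x hM)
    obtain ⟨j, hj⟩ := hd (e a)
    by_cases hja : j = a
    · subst hja
      exact hj x (mem_insert_self _ _)
    · have := he a j hja
      have := hj _ (mem_insert_of_mem (hpR j))
      omega
  have hDe : D = {insert (e a) R, insert (e b) R} := by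
    ext S
    rw [hD]
    simp only [mem_insert, mem_singleton]
    constructor
    · rintro ⟨k1, k2, k3⟩
      obtain ⟨x, hx, rfl⟩ := exists_insert k1 (by omega)
      obtain ⟨i, hi⟩ := k3 x
      have hlt : u i x < u i (p i) := by
        refine lt_of_le_of_ne (hi _ (mem_insert_of_mem (hpR i))) ?_
        intro h'
        apply hx
        rw [hu i h']
        exact hpR i
      obtain ⟨j, hj⟩ := k3 (p i)
      have e1 : p j = p i :=
        hu j (le_antisymm (hpm j _ (hpR i)) (hj _ (mem_insert_of_mem (hpR j))))
      have e2 := hj x (mem_insert_self _ _)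
      have hji : j ≠ i := by
        rintro rfl
        omega
      rcases hcoll i j hji.symm e1.symm with ⟨rfl, rfl⟩ | ⟨rfl, rfl⟩
      · left
        rw [hforw i j hji.symm hcoll x hx k3 hlt]
      · right
        rw [hforw i j hji.symm (fun k l h h' => (hcoll k l h h').symm) x hx k3 hlt]
    · rintro (rfl | rfl)
      · obtain ⟨q1, q2⟩ := hback a b hab hpab
        exact ⟨subset_insert _ _, by rw [card_insert_of_notMem q1, hR], q2⟩
      · obtain ⟨q1, q2⟩ := hback b a hab.symm hpab.symm
        exact ⟨subset_insert _ _, by rw [card_insert_of_notMem q1, hR], q2⟩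
  rw [hDe, card_pair]
  · exact even_two
  · intro h
    have hmem : e a ∈ insert (e b) R := by rw [← h]; exact mem_insert_self _ _
    rcases mem_insert.1 hmem with h | h
    · obtain ⟨i, hi⟩ := hdom (e a)
      have hi' := hi _ (hpR i)
      by_cases hia : i = a
      · have := he b i (by rw [hia]; exact hab)
        rw [← h] at this
        omega
      · have := he a i hia
        omega
    · exact (hback a b hab hpab).1 h

/-- The outer door lies in exactly one room. -/
lemma rooms_outer (u : ι → X → ℕ) (hu : ∀ i, Function.Injective (u i)) (s : ι → X)
    (hs : Function.Injective s)
    (h1 : ∀ i x, u i (s i) ≤ u i x)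
    (h2 : ∀ i j, j ≠ i → ∀ x, x ∉ Set.range s → u i x < u i (s j))
    (t : X) (ht : t ∉ Set.range s) (i0 : ι) (D : Finset (Finset X))
    (hD : ∀ S, S ∈ D ↔ ((univ.erase i0).image s ⊆ S ∧ S.card = Fintype.card ι ∧ Dom u S)) :
    D.card = 1 := by
  classical
  have hpos : 0 < Fintype.card ι := Fintype.card_pos_iff.2 ⟨i0⟩
  have hcard : ((univ.erase i0).image s).card + 1 = Fintype.card ι := by
    rw [card_image_of_injective _ hs, card_erase_of_mem (mem_univ _), card_univ]
    omega
  obtain ⟨m, hm, hmax⟩ := exists_max_image (univ.filter (fun x => x ∉ Set.range s)) (u i0)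
    ⟨t, by simpa using ht⟩
  simp only [mem_filter, mem_univ, true_and] at hm hmax
  have hmem : ∀ i, i ≠ i0 → s i ∈ (univ.erase i0).image s := fun i hi =>
    mem_image_of_mem _ (by simp [hi])
  rw [card_eq_one]
  refine ⟨insert m ((univ.erase i0).image s), ?_⟩
  ext S
  rw [hD, mem_singleton]
  constructor
  · rintro ⟨k1, k2, k3⟩
    obtain ⟨x, hx, rfl⟩ := exists_insert k1 (by omega)
    have key : ∀ y, y ∉ Set.range s → ∀ i, i ≠ i0 → ¬ u i y ≤ u i (s i) := by
      intro y hy i hi h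
      exact hy ⟨i, hu i (le_antisymm (h1 i y) h)⟩
    have hbig : ∀ y, y ∉ Set.range s → u i0 y ≤ u i0 x := by
      intro y hy
      obtain ⟨i, hi⟩ := k3 y
      by_cases hii : i = i0
      · subst hii
        exact hi x (mem_insert_self _ _)
      · exact absurd (hi _ (mem_insert_of_mem (hmem i hii))) (key y hy i hii)
    have hxs : x ∉ Set.range s := by
      rintro ⟨i, rfl⟩
      by_cases hii : i = i0
      · subst hii
        exact ht ⟨i, hu i (le_antisymm (h1 i t) (hbig t ht))⟩
      · exact hx (hmem i hii)
    have : x = m := hu i0 (le_antisymm (hmax x hxs) (hbig m hm))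
    rw [this]
  · rintro rfl
    refine ⟨subset_insert _ _, ?_, ?_⟩
    · rw [card_insert_of_notMem, hcard]
      intro h
      obtain ⟨i, -, hi⟩ := mem_image.1 h
      exact hm ⟨i, hi⟩
    · intro y
      by_cases hy : y ∈ Set.range s
      · obtain ⟨i, rfl⟩ := hy
        exact ⟨i, fun x _ => h1 i x⟩
      · refine ⟨i0, fun x hx => ?_⟩
        rcases mem_insert.1 hx with rfl | hx
        · exact hmax y hy
        · obtain ⟨j, hj, rfl⟩ := mem_image.1 hx
          exact (h2 i0 j (by simpa using hj) y hy).le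

/-- Scarf's lemma. -/
lemma scarf (u : ι → X → ℕ) (hu : ∀ i, Function.Injective (u i)) (s : ι → X)
    (hs : Function.Injective s)
    (h1 : ∀ i x, u i (s i) ≤ u i x)
    (h2 : ∀ i j, j ≠ i → ∀ x, x ∉ Set.range s → u i x < u i (s j))
    (t : X) (ht : t ∉ Set.range s) (i0 : ι) (c : X → ι) (hc : ∀ i, c (s i) = i) :
    ∃ S : Finset X, S.card = Fintype.card ι ∧ Dom u S ∧ S.image c = univ := by
  classical
  by_contra! hno
  let rooms : Finset (Finset X) := univ.filter (fun S => S.card = Fintype.card ι ∧ Dom u S)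
  let doors : Finset (Finset X) := univ.filter
    (fun R => R.card + 1 = Fintype.card ι ∧ R.image c = univ.erase i0)
  have hpos : 0 < Fintype.card ι := Fintype.card_pos_iff.2 ⟨i0⟩
  have hdc := sum_card_bipartiteAbove_eq_sum_card_bipartiteBelow (s := rooms) (t := doors)
    (fun S R => R ⊆ S)
  have hev : Even (∑ S ∈ rooms, (bipartiteAbove (fun S R => R ⊆ S) doors S).card) := by
    apply even_sum
    intro S hS
    simp only [rooms, mem_filter, mem_univ, true_and] at hS
    apply doors_even c i0 S hS.1 (hno S hS.1 hS.2)
    intro R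
    simp only [bipartiteAbove, doors, mem_filter, mem_univ, true_and]
    tauto
  have hR0 : (univ.erase i0).image s ∈ doors := by
    simp only [doors, mem_filter, mem_univ, true_and]
    constructor
    · rw [card_image_of_injective _ hs, card_erase_of_mem (mem_univ _), card_univ]
      omega
    · rw [image_image]
      have : c ∘ s = id := funext hc
      rw [this, image_id]
  rw [hdc, ← add_sum_erase _ _ hR0, rooms_outer u hu s hs h1 h2 t ht i0] at hev
  · have hev2 : Even (∑ R ∈ doors.erase ((univ.erase i0).image s),
        (bipartiteBelow (fun S R => R ⊆ S) rooms R).card) := by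
      apply even_sum
      intro R hR
      rw [mem_erase] at hR
      obtain ⟨hne, hR⟩ := hR
      simp only [doors, mem_filter, mem_univ, true_and] at hR
      have : ∃ t ∈ R, t ∉ Set.range s := by
        by_contra! hall
        apply hne
        ext x
        constructor
        · intro hx
          obtain ⟨i, rfl⟩ := hall x hx
          apply mem_image_of_mem
          rw [← hR.2, ← hc i]
          simpa [hc] using mem_image_of_mem c hx
        · intro hx
          obtain ⟨i, hi, rfl⟩ := mem_image.1 hx
          rw [← hR.2] at hi
          obtain ⟨r, hr, rfl⟩ := mem_image.1 hi
          obtain ⟨j, rfl⟩ := hall r hr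
          rwa [hc]
      obtain ⟨t', ht', hts⟩ := this
      apply rooms_even u hu s h2 R hR.1 t' ht' hts
      intro S
      simp only [bipartiteBelow, rooms, mem_filter, mem_univ, true_and]
      tauto
    rw [Nat.even_add] at hev
    simp [hev2] at hev
  · intro S
    simp only [bipartiteBelow, rooms, mem_filter, mem_univ, true_and]
    tauto

end Comb

/-- Discrete fixed-point lemma on the grid. -/
lemma grid (n : ℕ) (hn : 0 < n) (k : ℕ) (c : (Fin n → ℕ) → Fin n) :
    ∃ z : Fin n → ℕ, ∑ i, z i = k ∧ ∀ i, z i ≤ n ∨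
      ∃ q : Fin n → ℕ, ∑ i, q i = k ∧ c q = i ∧ ∀ j, q j ≤ z j + n ∧ z j ≤ q j + n := by
  classical
  let T := {x : Fin n → ℕ // x ∈ piAntidiag (univ : Finset (Fin n)) k}
  have hT : ∀ x : T, ∑ i, x.1 i = k := fun x => (mem_piAntidiag.1 x.2).1
  have hTk : ∀ (x : T) i, x.1 i ≤ k := fun x i => by
    exact (single_le_sum (f := x.1) (fun _ _ => Nat.zero_le _) (mem_univ i)).trans (hT x).le
  have mkT : ∀ x : Fin n → ℕ, ∑ i, x i = k → ∃ t : T, t.1 = x := fun x hx =>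
    ⟨⟨x, mem_piAntidiag.2 ⟨hx, fun i _ => mem_univ i⟩⟩, rfl⟩
  let N := Fintype.card T
  let r : T ≃ Fin N := Fintype.equivFin T
  let i0 : Fin n := ⟨0, hn⟩
  let u : Fin n → T ⊕ Fin n → ℕ := fun i => Sum.elim (fun t => 1 + (N * t.1 i + (r t : ℕ)))
    (fun j => if j = i then 0 else 1 + N * (k + 1) + j)
  have hub : ∀ (t : T) i, N * t.1 i + (r t : ℕ) < N * (k + 1) := by
    intro t i
    have := (r t).2
    have := Nat.mul_le_mul_left N (hTk t i)
    rw [mul_add]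
    omega
  have hult : ∀ (t t' : T) i, t.1 i < t'.1 i → u i (Sum.inl t) < u i (Sum.inl t') := by
    intro t t' i h
    have := (r t).2
    have := Nat.mul_le_mul_left N (Nat.succ_le_of_lt h)
    simp only [u, Sum.elim_inl]
    rw [Nat.succ_eq_add_one, mul_add] at this
    omega
  have hu : ∀ i, Function.Injective (u i) := by
    rintro i (t | j) (t' | j') h
    · have e1 : t.1 i = t'.1 i := by
        rcases lt_trichotomy (t.1 i) (t'.1 i) with h' | h' | h'
        · have := hult t t' i h'; omega
        · exact h'
        · have := hult t' t i h'; omega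
      simp only [u, Sum.elim_inl] at h
      rw [e1] at h
      have : r t = r t' := Fin.ext (by omega)
      rw [r.injective this]
    · have := hub t i
      simp only [u, Sum.elim_inl, Sum.elim_inr] at h
      split_ifs at h <;> omega
    · have := hub t' i
      simp only [u, Sum.elim_inl, Sum.elim_inr] at h
      split_ifs at h <;> omega
    · simp only [u, Sum.elim_inr] at h
      congr 1
      split_ifs at h with g1 g2 g2
      · rw [g1, g2]
      · omega
      · omega
      · exact Fin.ext (by omega)
  obtain ⟨t0, -⟩ := mkT (Pi.single i0 k) (by simp)
  let col : T ⊕ Fin n → Fin n := Sum.elim (fun t => c t.1) id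
  obtain ⟨S, hS1, hS2, hS3⟩ := scarf u hu Sum.inr Sum.inr_injective
    (by intro i x; simp [u])
    (by
      rintro i j hij (t | j') hx
      · have := hub t i
        simp only [u, Sum.elim_inl, Sum.elim_inr, if_neg hij]
        omega
      · exact absurd ⟨j', rfl⟩ hx)
    (Sum.inl t0) (by simp) i0 col (fun i => rfl)
  have hcinj : Set.InjOn col S := by
    apply card_image_iff.1
    rw [hS3, hS1, card_univ]
  have hslack : ∀ (t : T) i, Sum.inr i ∈ S → ¬ ∀ x ∈ S, u i (Sum.inl t) ≤ u i x := by
    intro t i hi h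
    have := h _ hi
    simp [u] at this
  -- real points of S
  have hz : ∃ z : T, Sum.inl z ∈ S := by
    by_contra! hall
    obtain ⟨i, hi⟩ := hS2 (Sum.inl t0)
    have : i ∈ S.image col := by rw [hS3]; simp
    obtain ⟨x, hx, hxi⟩ := mem_image.1 this
    rcases x with t | j
    · exact hall t hx
    · have : j = i := hxi
      subst this
      exact hslack t0 j hx hi
  obtain ⟨z, hz⟩ := hz
  let C : Finset (Fin n) := univ.filter (fun i => Sum.inr i ∉ S)
  have hC : ∀ i, i ∈ C ↔ Sum.inr i ∉ S := by simp [C]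
  have hC1 : c z.1 ∈ C := by
    rw [hC]
    intro h
    have := hcinj h hz rfl
    cases this
  have hm : ∀ i, ∃ t : T, Sum.inl t ∈ S ∧ ∀ t' : T, Sum.inl t' ∈ S → t.1 i ≤ t'.1 i := by
    intro i
    obtain ⟨t, ht, ht'⟩ := exists_min_image (univ.filter (fun t : T => Sum.inl t ∈ S))
      (fun t => t.1 i) ⟨z, by simpa using hz⟩
    simp only [mem_filter, mem_univ, true_and] at ht ht'
    exact ⟨t, ht, ht'⟩
  choose m hmS hmin using hm
  have hsum : k ≤ (∑ i ∈ C, (m i).1 i) + n := by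
    by_contra! hlt
    have hCn : C.card ≤ n := by simpa using card_le_univ C
    have hlt' : ∑ i ∈ C, ((m i).1 i + 1) ≤ k := by
      rw [sum_add_distrib]; simp; omega
    obtain ⟨d, hd⟩ := Nat.exists_eq_add_of_le hlt'
    obtain ⟨y, hy⟩ := mkT (fun i => (if i ∈ C then (m i).1 i + 1 else 0) +
      (if i = c z.1 then d else 0)) (by
        rw [sum_add_distrib, sum_ite_mem, univ_inter]; simp [hd])
    obtain ⟨i, hi⟩ := hS2 (Sum.inl y)
    by_cases hiC : i ∈ C
    · have q1 := hi _ (hmS i)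
      have q2 := hult (m i) y i (by rw [hy]; simp only [if_pos hiC]; omega)
      omega
    · exact hslack y i (by rw [hC] at hiC; simpa using hiC) hi
  have hbound : ∀ q : T, Sum.inl q ∈ S →
      (∀ j ∈ C, q.1 j ≤ (m j).1 j + n) ∧ ∀ j, j ∉ C → q.1 j ≤ n := by
    intro q hq
    have hle : ∀ i ∈ C, (m i).1 i ≤ q.1 i := fun i _ => hmin i q hq
    constructor
    · intro j hj
      have e1 := sum_erase_add C (fun i => (m i).1 i) hj
      have e2 := sum_erase_add C (fun i => q.1 i) hj
      have e3 : ∑ i ∈ C.erase j, (m i).1 i ≤ ∑ i ∈ C.erase j, q.1 i :=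
        sum_le_sum (fun i hi => hle i (mem_of_mem_erase hi))
      have e4 : ∑ i ∈ C, q.1 i ≤ ∑ i, q.1 i := sum_le_sum_of_subset (subset_univ C)
      have e5 := hT q
      omega
    · intro j hj
      have e3 : ∑ i ∈ C, (m i).1 i ≤ ∑ i ∈ C, q.1 i := sum_le_sum hle
      have e4 : ∑ i ∈ insert j C, q.1 i ≤ ∑ i, q.1 i := sum_le_sum_of_subset (subset_univ _)
      rw [sum_insert hj] at e4
      have e5 := hT q
      omega
  refine ⟨z.1, hT z, fun i => ?_⟩
  by_cases hi : i ∈ C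
  · right
    have : i ∈ S.image col := by rw [hS3]; simp
    obtain ⟨x, hx, hxi⟩ := mem_image.1 this
    rcases x with q | j
    · refine ⟨q.1, hT q, hxi, fun j => ?_⟩
      by_cases hj : j ∈ C
      · have := (hbound q hx).1 j hj
        have := (hbound z hz).1 j hj
        have := hmin j q hx
        have := hmin j z hz
        omega
      · have := (hbound q hx).2 j hj
        have := (hbound z hz).2 j hj
        omega
    · have : j = i := hxi
      subst this
      exact absurd hx ((hC j).1 hi)
  · left
    exact (hbound z hz).2 i hi

open Filter Topology in
/-- Continuous version. -/
lemma cont (n : ℕ) (hn : 0 < n) (g : Fin n → (Fin n → ℝ) → ℝ) (hg : ∀ i, Continuous (g i))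
    (hlab : ∀ x ∈ stdSimplex ℝ (Fin n), ∃ i, 0 ≤ g i x) :
    ∃ z ∈ stdSimplex ℝ (Fin n), ∀ i, z i = 0 ∨ 0 ≤ g i z := by
  classical
  let sc : ℕ → (Fin n → ℕ) → (Fin n → ℝ) := fun k x i => (x i : ℝ) / (k + 1 : ℕ)
  have hsc : ∀ k x, ∑ i, x i = k + 1 → sc k x ∈ stdSimplex ℝ (Fin n) := by
    intro k x hx
    refine ⟨fun i => by positivity, ?_⟩
    simp only [sc]
    rw [← sum_div, ← Nat.cast_sum, hx]
    exact div_self (by positivity)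
  have key : ∀ k : ℕ, ∃ z ∈ stdSimplex ℝ (Fin n), ∀ i, z i ≤ (n : ℝ) / (k + 1 : ℕ) ∨
      ∃ q : Fin n → ℝ, 0 ≤ g i q ∧ dist q z ≤ (n : ℝ) / (k + 1 : ℕ) := by
    intro k
    have hc : ∀ x : Fin n → ℕ, ∃ i, ∑ i, x i = k + 1 → 0 ≤ g i (sc k x) := by
      intro x
      by_cases hx : ∑ i, x i = k + 1
      · obtain ⟨i, hi⟩ := hlab _ (hsc k x hx)
        exact ⟨i, fun _ => hi⟩
      · exact ⟨⟨0, hn⟩, fun h => absurd h hx⟩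
    choose c hc using hc
    obtain ⟨z, hz, hz'⟩ := grid n hn (k + 1) c
    refine ⟨sc k z, hsc k z hz, fun i => ?_⟩
    rcases hz' i with h | ⟨q, hq, hqi, hqz⟩
    · left
      simp only [sc]
      gcongr
    · right
      refine ⟨sc k q, ?_, ?_⟩
      · rw [← hqi]; exact hc q hq
      · rw [dist_pi_le_iff (by positivity)]
        intro j
        obtain ⟨a1, a2⟩ := hqz j
        have b1 : (q j : ℝ) ≤ z j + n := by exact_mod_cast a1
        have b2 : (z j : ℝ) ≤ q j + n := by exact_mod_cast a2
        simp only [sc]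
        rw [Real.dist_eq, ← sub_div, abs_div, abs_of_pos (a := ((k + 1 : ℕ) : ℝ)) (by positivity)]
        gcongr
        rw [abs_le]
        constructor <;> linarith
  choose z hz hz' using key
  obtain ⟨w, hw, φ, hφ, hlim⟩ := (isCompact_stdSimplex ℝ (Fin n)).tendsto_subseq hz
  have hε : Tendsto (fun k : ℕ => (n : ℝ) / (φ k + 1 : ℕ)) atTop (𝓝 0) := by
    have h0 : Tendsto (fun k : ℕ => (n : ℝ) / (k : ℕ)) atTop (𝓝 0) :=
      tendsto_const_div_atTop_nhds_zero_nat _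
    exact h0.comp ((tendsto_add_atTop_nat 1).comp hφ.tendsto_atTop)
  refine ⟨w, hw, fun i => ?_⟩
  have hfr : ∃ᶠ k in atTop, (z (φ k) i ≤ (n : ℝ) / (φ k + 1 : ℕ) ∨
      ∃ q : Fin n → ℝ, 0 ≤ g i q ∧ dist q (z (φ k)) ≤ (n : ℝ) / (φ k + 1 : ℕ)) :=
    (Eventually.of_forall (fun k => hz' (φ k) i)).frequently
  rcases frequently_or_distrib.1 hfr with h | h
  · left
    apply le_antisymm _ (hw.1 i)
    have hwi : Tendsto (fun k => z (φ k) i) atTop (𝓝 (w i)) := (tendsto_pi_nhds.1 hlim) i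
    exact le_of_tendsto_of_tendsto_of_frequently hwi hε h
  · right
    have hcl : IsClosed {x | 0 ≤ g i x} := isClosed_le continuous_const (hg i)
    have : w ∈ closure {x | 0 ≤ g i x} := by
      rw [Metric.mem_closure_iff]
      intro ε hεp
      have e1 := Metric.tendsto_atTop.1 hlim (ε / 2) (by positivity)
      obtain ⟨K, hK⟩ := e1
      have e2 : ∀ᶠ k in atTop, (n : ℝ) / (φ k + 1 : ℕ) < ε / 2 :=
        hε.eventually (gt_mem_nhds (by positivity))
      obtain ⟨k, ⟨q, hq1, hq2⟩, hk1, hk2⟩ := (h.and_eventually (e2.and (eventually_ge_atTop K))).exists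
      refine ⟨q, hq1, ?_⟩
      have e3 := hK k hk2
      have e4 := dist_triangle q (z (φ k)) w
      rw [dist_comm]
      simp only [Function.comp] at e3
      linarith
    rwa [hcl.closure_eq] at this

end KKMAux

/-- Knaster–Kuratowski–Mazurkiewicz lemma: if the standard `(n-1)`-simplex is
covered by closed sets `C i` such that every face spanned by vertices in a
nonempty set `I` is covered by `⋃ i ∈ I, C i`, then all the `C i` have a common
point. -/
theorem kkm_lemma (n : ℕ) (hn : 0 < n) (C : Fin n → Set (Fin n → ℝ))
    (hclosed : ∀ i, IsClosed (C i))
    (hface : ∀ I : Finset (Fin n), I.Nonempty →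
      {m ∈ stdSimplex ℝ (Fin n) | ∀ j ∉ I, m j = 0} ⊆ ⋃ i ∈ I, C i) :
    (⋂ i, C i).Nonempty := by
  classical
  have hne : ∀ i, (C i).Nonempty := by
    intro i
    have := hface {i} (by simp) (a := Pi.single i 1)
      ⟨single_mem_stdSimplex ℝ i, fun j hj => by
        rw [Pi.single_eq_of_ne]; simpa using hj⟩
    exact ⟨_, by simpa using this⟩
  let d : Fin n → (Fin n → ℝ) → ℝ := fun i x => Metric.infDist x (C i)
  have hd0 : ∀ i x, 0 ≤ d i x := fun i x => Metric.infDist_nonneg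
  have hdc : ∀ i, Continuous (d i) := fun i => Metric.continuous_infDist_pt _
  let g : Fin n → (Fin n → ℝ) → ℝ := fun i x => d i x - x i * ∑ j, d j x
  have hsum : ∀ x ∈ stdSimplex ℝ (Fin n), ∑ i, g i x = 0 := by
    intro x hx
    simp only [g]
    rw [Finset.sum_sub_distrib, ← Finset.sum_mul, hx.2]
    ring
  obtain ⟨z, hz, hzg⟩ := KKMAux.cont n hn g
    (fun i => (hdc i).sub ((continuous_apply i).mul (continuous_finsetSum _ fun j _ => hdc j)))
    (by
      intro x hx
      by_contra! h
      have := Finset.sum_lt_sum_of_nonempty (s := Finset.univ) ⟨⟨0, hn⟩, Finset.mem_univ _⟩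
        (fun i _ => h i)
      rw [hsum x hx] at this
      simp at this)
  have hg0 : ∀ i, 0 ≤ g i z := by
    intro i
    rcases hzg i with h | h
    · simp only [g, h, zero_mul, sub_zero]
      exact hd0 i z
    · exact h
  have hgz : ∀ i, g i z = 0 := fun i =>
    (Finset.sum_eq_zero_iff_of_nonneg (fun i _ => hg0 i)).1 (hsum z hz) i (Finset.mem_univ i)
  let I : Finset (Fin n) := Finset.univ.filter (fun i => z i ≠ 0)
  have hI : I.Nonempty := by
    by_contra h
    have h0 : ∀ i, z i = 0 := by
      intro i
      by_contra hi
      exact h ⟨i, by simp [I, hi]⟩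
    have := hz.2
    simp [h0] at this
  have hzI := hface I hI (a := z) ⟨hz, fun j hj => by simpa [I] using hj⟩
  simp only [Set.mem_iUnion] at hzI
  obtain ⟨i, hiI, hiC⟩ := hzI
  have hzi : z i ≠ 0 := by simpa [I] using hiI
  have hdi : d i z = 0 := Metric.infDist_zero_of_mem hiC
  have hD : ∑ j, d j z = 0 := by
    have := hgz i
    simp only [g, hdi, zero_sub, neg_eq_zero, mul_eq_zero] at this
    exact this.resolve_left hzi
  refine ⟨z, Set.mem_iInter.2 fun j => ?_⟩
  have := (Finset.sum_eq_zero_iff_of_nonneg (fun i _ => hd0 i z)).1 hD j (Finset.mem_univ j)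
  exact ((hclosed j).mem_iff_infDist_zero (hne j)).2 this
end

section
/- Let M be the open simplex {m ∈ ℝⁿ : mᵢ > 0, Σmᵢ = 1} and let f : M → ℝⁿ be continuous with fᵢ(m) ≥ 0 and Σᵢ fᵢ(m) = 1 for all m. Define Aᵢ = {m ∈ M_ε : fᵢ(m) ≥ mᵢ} on the restricted simplex M_ε = {m : mᵢ ≥ ε, Σmᵢ = 1} with 0 < ε < 1/n. Suppose that for every subset I, the face of M_ε determined by I (where mⱼ = ε for j ∉ I) is covered by ⋃_{i∈I} Aᵢ. Then there exists m* ∈ M_ε with f(m*) = m*. -/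
open Finset

namespace KKMaux

/-- mod 2 chains of ordered (lists of) points -/
abbrev Ch (E : Type*) := List E →₀ ZMod 2

section
variable {E : Type*}

noncomputable def cone (a : E) : Ch E →ₗ[ZMod 2] Ch E :=
  Finsupp.linearCombination (ZMod 2) (fun L => Finsupp.single (a :: L) 1)

noncomputable def bd : List E → Ch E
  | [] => 0
  | a :: L => Finsupp.single L 1 + cone a (bd L)

noncomputable def D : Ch E →ₗ[ZMod 2] Ch E := Finsupp.linearCombination (ZMod 2) bd

lemma D_single (L : List E) : D (Finsupp.single L 1) = bd L := by simp [D]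

lemma cone_single (a : E) (L : List E) :
    cone a (Finsupp.single L 1) = Finsupp.single (a :: L) 1 := by simp [cone]

lemma add_self_ch (c : Ch E) : c + c = 0 := by
  ext L
  exact CharTwo.add_self_eq_zero _

lemma D_cone (a : E) (c : Ch E) : D (cone a c) = c + cone a (D c) := by
  have : D ∘ₗ cone a = LinearMap.id + cone a ∘ₗ D := by
    apply Finsupp.lhom_ext'
    intro L
    apply LinearMap.ext_ring
    simp [cone_single, D_single, bd]
  exact LinearMap.congr_fun this c

lemma D_bd (L : List E) : D (bd L) = 0 := by
  induction L with
  | nil => simp [bd]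
  | cons a L ih =>
    rw [bd, map_add, D_cone, D_single, ih, map_zero, add_zero, add_self_ch]

/-- chains supported on lists satisfying `T` -/
def Sup (T : List E → Prop) : Submodule (ZMod 2) (Ch E) :=
  Finsupp.supported (ZMod 2) (ZMod 2) {L | T L}

lemma single_mem {T : List E → Prop} {L : List E} (h : T L) :
    Finsupp.single L (1 : ZMod 2) ∈ Sup T :=
  Finsupp.single_mem_supported _ _ h

lemma sup_mono {T T' : List E → Prop} (h : ∀ L, T L → T' L) {c : Ch E} (hc : c ∈ Sup T) :
    c ∈ Sup T' :=
  Finsupp.supported_mono (fun L hL => h L hL) hc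

lemma sup_and {T T' : List E → Prop} {c : Ch E} (hc : c ∈ Sup T) (hc' : c ∈ Sup T') :
    c ∈ Sup (fun L => T L ∧ T' L) := by
  intro L hL
  exact ⟨hc hL, hc' hL⟩

lemma lin_mem {M : Type*} [AddCommGroup M] [Module (ZMod 2) M] {T : List E → Prop}
    {W : Submodule (ZMod 2) M} {g : List E → M}
    (h : ∀ L, T L → g L ∈ W) {c : Ch E} (hc : c ∈ Sup T) :
    Finsupp.linearCombination (ZMod 2) g c ∈ W := by
  rw [Finsupp.linearCombination_apply]
  exact Submodule.sum_mem _ (fun L hL => Submodule.smul_mem _ _ (h L (hc hL)))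

lemma lin_congr {M : Type*} [AddCommGroup M] [Module (ZMod 2) M] {T : List E → Prop}
    {g g' : List E → M}
    (h : ∀ L, T L → g L = g' L) {c : Ch E} (hc : c ∈ Sup T) :
    Finsupp.linearCombination (ZMod 2) g c = Finsupp.linearCombination (ZMod 2) g' c := by
  rw [Finsupp.linearCombination_apply, Finsupp.linearCombination_apply]
  exact Finset.sum_congr rfl (fun L hL => by simp only []; rw [h L (hc hL)])

lemma cone_mem {T T' : List E → Prop} {a : E} (h : ∀ L, T L → T' (a :: L)) {c : Ch E}
    (hc : c ∈ Sup T) : cone a c ∈ Sup T' :=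
  lin_mem (fun L hL => single_mem (h L hL)) hc

lemma bd_mem (L : List E) :
    bd L ∈ Sup (fun K => K.length + 1 = L.length ∧ ∀ x ∈ K, x ∈ L) := by
  induction L with
  | nil => simp [bd]
  | cons a L ih =>
    rw [bd]
    refine Submodule.add_mem _ (single_mem ⟨by simp, fun x hx => by simp [hx]⟩) ?_
    refine cone_mem ?_ ih
    rintro K ⟨h1, h2⟩
    refine ⟨by simp [h1], ?_⟩
    intro x hx
    rcases List.mem_cons.1 hx with rfl | hx
    · simp
    · simp [h2 x hx]

/-- label counting -/
noncomputable def phi (l : E → ℕ) (S : Multiset ℕ) : Ch E →ₗ[ZMod 2] ZMod 2 :=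
  Finsupp.linearCombination (ZMod 2) (fun L => if ((L.map l : List ℕ) : Multiset ℕ) = S then 1 else 0)

lemma phi_single (l : E → ℕ) (S : Multiset ℕ) (L : List E) :
    phi l S (Finsupp.single L 1) = if ((L.map l : List ℕ) : Multiset ℕ) = S then 1 else 0 := by
  simp [phi]

lemma phi_cone (l : E → ℕ) (S : Multiset ℕ) (a : E) (c : Ch E) :
    phi l S (cone a c) = if l a ∈ S then phi l (S.erase (l a)) c else 0 := by
  have : phi l S ∘ₗ cone a = if l a ∈ S then phi l (S.erase (l a)) else 0 := by
    apply Finsupp.lhom_ext'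
    intro L
    apply LinearMap.ext_ring
    split_ifs with h
    · simp only [LinearMap.comp_apply, Finsupp.lsingle_apply, cone_single, phi_single]
      congr 1
      rw [List.map_cons, ← Multiset.cons_coe]
      conv_lhs => rw [← Multiset.cons_erase h]
      rw [Multiset.cons_inj_right]
    · simp only [LinearMap.comp_apply, Finsupp.lsingle_apply, cone_single, phi_single]
      rw [if_neg]
      · simp
      · rintro rfl
        exact h (by simp)
  have h2 := LinearMap.congr_fun this c
  rw [LinearMap.comp_apply] at h2
  rw [h2]
  split_ifs <;> simp

lemma phi_bd (l : E → ℕ) (L : List E) : ∀ S : Multiset ℕ,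
    phi l S (bd L) =
      ((L.map l).countP (fun a => ((L.map l : List ℕ) : Multiset ℕ) = a ::ₘ S) : ℕ) := by
  induction L with
  | nil => intro S; simp [bd]
  | cons b L ih =>
    intro S
    rw [bd, map_add, phi_single, phi_cone, ih, List.map_cons, List.countP_cons, add_comm]
    push_cast
    congr 1
    · split_ifs with h
      · congr 1
        apply List.countP_congr
        intro a ha
        simp only [decide_eq_true_eq]
        rw [← Multiset.cons_coe]
        constructor
        · intro h1
          rw [h1, Multiset.cons_swap, Multiset.cons_erase h]
        · intro h1
          rw [← Multiset.cons_erase h, Multiset.cons_swap, Multiset.cons_inj_right] at h1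
          exact h1
      · rw [List.countP_eq_zero.2]
        · simp
        · intro a ha h1
          simp only [decide_eq_true_eq] at h1
          rw [← Multiset.cons_coe] at h1
          rcases Multiset.cons_eq_cons.1 h1 with ⟨h2, h3⟩ | ⟨_, cs, _, h3⟩
          · apply h
            rw [← h3, h2]
            exact ha
          · apply h
            rw [h3]
            simp
    · simp only [decide_eq_true_eq]
      rw [← Multiset.cons_coe]
      simp only [Multiset.cons_inj_right]

lemma phi_bd_range (l : E → ℕ) (k : ℕ) (L : List E) (hL : ∀ x ∈ L, l x < k + 1) :
    phi l (Multiset.range k) (bd L) =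
      if ((L.map l : List ℕ) : Multiset ℕ) = Multiset.range (k + 1) then 1 else 0 := by
  rw [phi_bd]
  by_cases hex : ∃ a, ((L.map l : List ℕ) : Multiset ℕ) = a ::ₘ Multiset.range k
  · obtain ⟨a, ha⟩ := hex
    have hal : a < k + 1 := by
      have : a ∈ ((L.map l : List ℕ) : Multiset ℕ) := by rw [ha]; simp
      rw [Multiset.mem_coe, List.mem_map] at this
      obtain ⟨x, hx, rfl⟩ := this
      exact hL x hx
    have h1 : (L.map l).countP (fun b => ((L.map l : List ℕ) : Multiset ℕ) = b ::ₘ Multiset.range k)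
        = (L.map l).count a := by
      rw [List.count]
      apply List.countP_congr
      intro b hb
      rw [ha]
      simp only [decide_eq_true_eq, Multiset.cons_inj_left, beq_iff_eq]
      exact eq_comm
    rw [h1, ← Multiset.coe_count, ha, Multiset.range_succ, Multiset.count_cons_self]
    simp only [Multiset.cons_inj_left]
    by_cases hak : a = k
    · subst hak
      simp
    · have : a ∈ Multiset.range k := by simp; omega
      rw [Multiset.count_eq_one_of_mem (Multiset.nodup_range k) this, if_neg hak]
      rfl
  · have h1 : (L.map l).countP (fun b => ((L.map l : List ℕ) : Multiset ℕ) = b ::ₘ Multiset.range k)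
        = 0 := by
      rw [List.countP_eq_zero]
      intro b hb h
      exact hex ⟨b, by simpa using h⟩
    rw [h1, if_neg]
    · simp
    · intro h
      exact hex ⟨k, by rw [h, Multiset.range_succ]⟩

lemma phi_D (l : E → ℕ) (k : ℕ) (c : Ch E) (hc : c ∈ Sup (fun L : List E => ∀ x ∈ L, l x < k + 1)) :
    phi l (Multiset.range k) (D c) = phi l (Multiset.range (k + 1)) c := by
  have : phi l (Multiset.range k) (D c) =
      Finsupp.linearCombination (ZMod 2) (fun L => phi l (Multiset.range k) (bd L)) c := by
    rw [D, Finsupp.apply_linearCombination]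
    rfl
  rw [this, phi]
  exact lin_congr (fun L hL => phi_bd_range l k L hL) hc

end

section
variable {E : Type*} [NormedAddCommGroup E] [NormedSpace ℝ E]

noncomputable def bary (L : List E) : E := (L.length : ℝ)⁻¹ • L.sum

noncomputable def sd : ℕ → List E → Ch E
  | 0, _ => Finsupp.single [] 1
  | k + 1, L => cone (bary L) (Finsupp.linearCombination (ZMod 2) (sd k) (bd L))

noncomputable def Sd (k : ℕ) : Ch E →ₗ[ZMod 2] Ch E := Finsupp.linearCombination (ZMod 2) (sd k)

lemma Sd_single (k : ℕ) (L : List E) : Sd k (Finsupp.single L 1) = sd k L := by simp [Sd]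

lemma D_Sd_aux (k : ℕ) (h : ∀ L : List E, D (sd (k + 1) L) = Sd k (bd L)) (c : Ch E) :
    D (Sd (k + 1) c) = Sd k (D c) := by
  have : D ∘ₗ Sd (k + 1) = Sd k ∘ₗ (D : Ch E →ₗ[ZMod 2] Ch E) := by
    apply Finsupp.lhom_ext'
    intro L
    apply LinearMap.ext_ring
    simp [Sd_single, D_single, h]
  exact LinearMap.congr_fun this c

lemma D_Sd0 (c : Ch E) : D (Sd 0 c) = 0 := by
  have : D ∘ₗ Sd 0 = (0 : Ch E →ₗ[ZMod 2] Ch E) := by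
    apply Finsupp.lhom_ext'
    intro L
    apply LinearMap.ext_ring
    simp [Sd_single, D_single, sd, bd]
  exact LinearMap.congr_fun this c

lemma D_sd (k : ℕ) : ∀ L : List E, D (sd (k + 1) L) = Sd k (bd L) := by
  induction k with
  | zero =>
    intro L
    rw [sd, D_cone]
    change Sd 0 (bd L) + cone _ (D (Sd 0 (bd L))) = _
    rw [D_Sd0, map_zero, add_zero]
  | succ k ih =>
    intro L
    rw [sd, D_cone]
    change Sd (k+1) (bd L) + cone _ (D (Sd (k+1) (bd L))) = _
    rw [D_Sd_aux k ih, D_bd, map_zero, map_zero, add_zero]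

lemma D_Sd_iter (k N : ℕ) (c : Ch E) :
    D ((Sd (k + 1))^[N] c) = (Sd k)^[N] (D c) := by
  induction N generalizing c with
  | zero => rfl
  | succ N ih =>
    rw [Function.iterate_succ_apply, ih, D_Sd_aux k (D_sd k), Function.iterate_succ_apply]

lemma list_sum_mem {P : Set E} (hP : Convex ℝ P) (L : List E) (hL : ∀ x ∈ L, x ∈ P)
    (h0 : L ≠ []) : bary L ∈ P := by
  have hpos : (0 : ℝ) < L.length := by
    exact_mod_cast List.length_pos_iff.2 h0
  have : bary L = ∑ i : Fin L.length, (L.length : ℝ)⁻¹ • L[i] := by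
    rw [bary, ← Finset.smul_sum]
    congr 1
    exact (Fin.sum_univ_getElem L).symm
  rw [this]
  apply hP.sum_mem
  · intro i _; positivity
  · simp [hpos.ne']
  · intro i _
    exact hL _ (List.getElem_mem _)

lemma sd_mem_convex {P : Set E} (hP : Convex ℝ P) (k : ℕ) : ∀ L : List E, L.length = k →
    (∀ x ∈ L, x ∈ P) → sd k L ∈ Sup (fun K => K.length = k ∧ ∀ x ∈ K, x ∈ P) := by
  induction k with
  | zero => intro L _ _; exact single_mem (by simp)
  | succ k ih =>
    intro L hk hL
    rw [sd]
    have hb : bary L ∈ P := list_sum_mem hP L hL (by rintro rfl; simp at hk)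
    refine cone_mem (T := fun K => K.length = k ∧ ∀ x ∈ K, x ∈ P) ?_ ?_
    · rintro K ⟨h1, h2⟩
      refine ⟨by simp [h1], ?_⟩
      intro x hx
      rcases List.mem_cons.1 hx with rfl | hx
      · exact hb
      · exact h2 x hx
    · refine lin_mem ?_ (bd_mem L)
      rintro K ⟨h1, h2⟩
      exact ih K (by omega) (fun x hx => hL x (h2 x hx))

lemma sum_sub_list (L : List E) (v : E) :
    (L.map (fun x => x - v)).sum = L.sum - (L.length : ℝ) • v := by
  induction L with
  | nil => simp
  | cons a L ih =>
    simp only [List.map_cons, List.sum_cons, ih, List.length_cons]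
    push_cast
    module

lemma norm_list_sum (L : List E) (δ : ℝ) (h : ∀ x ∈ L, ‖x‖ ≤ δ) :
    ‖L.sum‖ ≤ L.length * δ := by
  induction L with
  | nil => simp
  | cons a L ih =>
    simp only [List.sum_cons, List.length_cons]
    push_cast
    have h1 := ih (fun x hx => h x (by simp [hx]))
    have h2 := h a (by simp)
    have h3 := norm_add_le a L.sum
    linarith

lemma dist_bary (n : ℕ) (L : List E) (hn : L.length ≤ n) (δ : ℝ) (hδ : 0 ≤ δ)
    (h : ∀ x ∈ L, ∀ y ∈ L, dist x y ≤ δ) (v : E) (hv : v ∈ L) :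
    dist v (bary L) ≤ (1 - 1 / (n : ℝ)) * δ := by
  classical
  have hpos : (0 : ℝ) < L.length := by
    exact_mod_cast List.length_pos_of_mem hv
  have hperm := List.perm_cons_erase hv
  have hlen : ((L.erase v).length : ℝ) = L.length - 1 := by
    rw [hperm.length_eq]; simp
  have e1 : bary L - v = (L.length : ℝ)⁻¹ • ((L.erase v).map (fun x => x - v)).sum := by
    have : ((L.erase v).map (fun x => x - v)).sum = (L.map (fun x => x - v)).sum := by
      rw [(hperm.map (fun x => x - v)).sum_eq]; simp
    rw [this, sum_sub_list, smul_sub, smul_smul, inv_mul_cancel₀ hpos.ne', one_smul, bary]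
  have h2 : ‖((L.erase v).map (fun x => x - v)).sum‖ ≤ (L.length - 1) * δ := by
    have := norm_list_sum ((L.erase v).map (fun x => x - v)) δ ?_
    · rw [List.length_map, hlen] at this
      exact this
    · intro x hx
      obtain ⟨y, hy, rfl⟩ := List.mem_map.1 hx
      rw [← dist_eq_norm]
      exact h y (List.mem_of_mem_erase hy) v hv
  rw [dist_comm, dist_eq_norm, e1, norm_smul, Real.norm_of_nonneg (by positivity)]
  have hn' : (L.length : ℝ) ≤ n := by exact_mod_cast hn
  have h3 : 1 / (n : ℝ) ≤ 1 / L.length := one_div_le_one_div_of_le hpos hn'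
  calc (L.length : ℝ)⁻¹ * ‖((L.erase v).map (fun x => x - v)).sum‖
      ≤ (L.length : ℝ)⁻¹ * ((L.length - 1) * δ) := by gcongr
    _ = (1 - 1 / (L.length : ℝ)) * δ := by field_simp
    _ ≤ _ := by gcongr

lemma sd_mesh (n : ℕ) (hn1 : 1 ≤ n) (δ : ℝ) (hδ : 0 ≤ δ) (k : ℕ) (hk : k ≤ n) :
    ∀ L : List E, L.length = k →
    (∀ x ∈ L, ∀ y ∈ L, dist x y ≤ δ) →
    sd k L ∈ Sup (fun K => ∀ x ∈ K, ∀ y ∈ K, dist x y ≤ (1 - 1 / (n : ℝ)) * δ) := by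
  have hr : 0 ≤ (1 - 1 / (n : ℝ)) * δ := by
    have : (1 : ℝ) ≤ n := by exact_mod_cast hn1
    have : 1 / (n : ℝ) ≤ 1 := by rw [div_le_one (by linarith)]; exact this
    exact mul_nonneg (by linarith) hδ
  induction k with
  | zero => intro L _ _; exact single_mem (by simp)
  | succ k ih =>
    intro L hL hd
    rw [sd]
    refine cone_mem (T := fun K => (∀ x ∈ K, ∀ y ∈ K, dist x y ≤ (1 - 1 / (n : ℝ)) * δ) ∧
      (K.length = k ∧ ∀ x ∈ K, x ∈ Metric.closedBall (bary L) ((1 - 1 / (n : ℝ)) * δ))) ?_ ?_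
    · rintro K ⟨h1, _, h2⟩ x hx y hy
      rcases List.mem_cons.1 hx with rfl | hx <;> rcases List.mem_cons.1 hy with rfl | hy
      · simpa using hr
      · rw [dist_comm]; exact h2 y hy
      · exact h2 x hx
      · exact h1 x hx y hy
    · refine lin_mem ?_ (bd_mem L)
      rintro K ⟨h1, h2⟩
      refine sup_and (ih (by omega) K (by omega)
        (fun x hx y hy => hd x (h2 x hx) y (h2 y hy))) ?_
      refine sd_mem_convex (convex_closedBall _ _) k K (by omega) ?_
      intro x hx
      exact dist_bary n L (by omega) δ hδ hd x (h2 x hx)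

lemma Sd_iter_mem_convex {P : Set E} (hP : Convex ℝ P) (k N : ℕ) (c : Ch E)
    (hc : c ∈ Sup (fun K => K.length = k ∧ ∀ x ∈ K, x ∈ P)) :
    (Sd k)^[N] c ∈ Sup (fun K => K.length = k ∧ ∀ x ∈ K, x ∈ P) := by
  induction N with
  | zero => exact hc
  | succ N ih =>
    rw [Function.iterate_succ_apply']
    exact lin_mem (fun L hL => sd_mem_convex hP k L hL.1 hL.2) ih

lemma Sd_iter_mesh (n : ℕ) (hn1 : 1 ≤ n) (δ : ℝ) (hδ : 0 ≤ δ) (N : ℕ) (c : Ch E)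
    (hc : c ∈ Sup (fun K => K.length = n ∧ ∀ x ∈ K, ∀ y ∈ K, dist x y ≤ δ)) :
    (Sd n)^[N] c ∈ Sup (fun K => K.length = n ∧
      ∀ x ∈ K, ∀ y ∈ K, dist x y ≤ (1 - 1 / (n : ℝ)) ^ N * δ) := by
  have hr : 0 ≤ (1 - 1 / (n : ℝ)) := by
    have : (1 : ℝ) ≤ n := by exact_mod_cast hn1
    have : 1 / (n : ℝ) ≤ 1 := by rw [div_le_one (by linarith)]; exact this
    linarith
  induction N with
  | zero => simpa using hc
  | succ N ih =>
    rw [Function.iterate_succ_apply']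
    refine lin_mem (fun L hL => ?_) ih
    refine sup_and (sup_mono (fun K hK => hK.1)
      (sd_mem_convex convex_univ n L hL.1 (fun _ _ => Set.mem_univ _))) ?_
    rw [pow_succ', mul_assoc]
    exact sd_mesh n hn1 _ (by positivity) n le_rfl L hL.1 hL.2

/-- the list `[e (k-1), ..., e 0]` -/
def verts (e : ℕ → E) : ℕ → List E
  | 0 => []
  | k + 1 => e k :: verts e k

lemma verts_length (e : ℕ → E) (k : ℕ) : (verts e k).length = k := by
  induction k with
  | zero => rfl
  | succ k ih => simp [verts, ih]

lemma mem_verts (e : ℕ → E) (k : ℕ) (x : E) (hx : x ∈ verts e k) : ∃ i < k, x = e i := by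
  induction k with
  | zero => simp [verts] at hx
  | succ k ih =>
    rcases List.mem_cons.1 hx with rfl | hx
    · exact ⟨k, by omega, rfl⟩
    · obtain ⟨i, hi, rfl⟩ := ih hx
      exact ⟨i, by omega, rfl⟩

lemma bd_verts (n : ℕ) (e : ℕ → E) (P : ℕ → Set E)
    (he : ∀ i < n, ∀ j < n, i ≠ j → e i ∈ P j) (k : ℕ) (hk : k ≤ n) :
    bd (verts e k) ∈ Sup (fun K => K.length + 1 = k ∧ ∃ j < k, ∀ x ∈ K, x ∈ P j) := by
  induction k with
  | zero => simp [verts, bd]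
  | succ k ih =>
    rw [verts, bd]
    refine Submodule.add_mem _ (single_mem ⟨by simp [verts_length], k, by omega, ?_⟩) ?_
    · intro x hx
      obtain ⟨i, hi, rfl⟩ := mem_verts e k x hx
      exact he i (by omega) k (by omega) (by omega)
    · refine cone_mem ?_ (ih (by omega))
      rintro K ⟨h1, j, hj, h2⟩
      refine ⟨by simp [h1], j, by omega, ?_⟩
      intro x hx
      rcases List.mem_cons.1 hx with rfl | hx
      · exact he k (by omega) j (by omega) (by omega)
      · exact h2 x hx

lemma sperner (n : ℕ) (e : ℕ → E) (Q : Set E) (hQ : Convex ℝ Q) (P : ℕ → Set E)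
    (hP : ∀ j, Convex ℝ (P j))
    (heQ : ∀ i < n, e i ∈ Q)
    (he : ∀ i < n, ∀ j < n, i ≠ j → e i ∈ P j) (l : E → ℕ)
    (hl : ∀ x ∈ Q, l x < n) (hlP : ∀ x j, x ∈ P j → l x ≠ j) (N k : ℕ) (hk : k ≤ n) :
    phi l (Multiset.range k) ((Sd k)^[N] (Finsupp.single (verts e k) 1)) = 1 := by
  induction k with
  | zero =>
    have : (Sd 0)^[N] (Finsupp.single (verts e 0) (1 : ZMod 2)) = Finsupp.single [] 1 := by
      induction N with
      | zero => rfl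
      | succ N ih => rw [Function.iterate_succ_apply', ih, Sd_single, sd]
    rw [this, phi_single]
    simp
  | succ k ih =>
    rw [← phi_D]
    · rw [D_Sd_iter, D_single, verts, bd, ← Module.End.coe_pow, map_add, map_add]
      rw [Module.End.coe_pow, ih (by omega)]
      suffices h : phi l (Multiset.range k) ((Sd k)^[N] (cone (e k) (bd (verts e k)))) = 0 by
        rw [h, add_zero]
      have hc : cone (e k) (bd (verts e k)) ∈
          Sup (fun K => K.length = k ∧ ∃ j < k, ∀ x ∈ K, x ∈ P j) := by
        refine cone_mem ?_ (bd_verts n e P he k (by omega))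
        rintro K ⟨h1, j, hj, h2⟩
        refine ⟨by simp [h1], j, by omega, ?_⟩
        intro x hx
        rcases List.mem_cons.1 hx with rfl | hx
        · exact he k (by omega) j (by omega) (by omega)
        · exact h2 x hx
      have hc2 : (Sd k)^[N] (cone (e k) (bd (verts e k))) ∈
          Sup (fun K => K.length = k ∧ ∃ j < k, ∀ x ∈ K, x ∈ P j) := by
        clear ih
        induction N with
        | zero => exact hc
        | succ N ih =>
          rw [Function.iterate_succ_apply']
          refine lin_mem (fun L hL => ?_) ih
          obtain ⟨h1, j, hj, h2⟩ := hL
          exact sup_mono (fun K hK => ⟨hK.1, j, hj, hK.2⟩) (sd_mem_convex (hP j) k L h1 h2)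
      have := lin_mem (W := (⊥ : Submodule (ZMod 2) (ZMod 2)))
        (g := fun L => if ((L.map l : List ℕ) : Multiset ℕ) = Multiset.range k then 1 else 0)
        ?_ hc2
      · exact this
      · rintro L ⟨h1, j, hj, h2⟩
        rw [if_neg]
        · simp
        · intro h
          have : j ∈ ((L.map l : List ℕ) : Multiset ℕ) := by rw [h]; simpa using hj
          rw [Multiset.mem_coe, List.mem_map] at this
          obtain ⟨x, hx, hxj⟩ := this
          exact hlP x j (h2 x hx) hxj
    · have hconv : Convex ℝ (Q ∩ ⋂ j ∈ {j | k + 1 ≤ j ∧ j < n}, P j) :=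
        hQ.inter (convex_iInter₂ fun j _ => hP j)
      refine sup_mono ?_ (Sd_iter_mem_convex hconv (k+1) N _ (single_mem ⟨verts_length e _, ?_⟩))
      · rintro L ⟨_, hL⟩ x hx
        by_contra hcon
        have h1 := hl x (hL x hx).1
        have h2 := (hL x hx).2
        simp only [Set.mem_iInter] at h2
        exact hlP x _ (h2 (l x) ⟨by omega, h1⟩) rfl
      · intro x hx
        obtain ⟨i, hi, rfl⟩ := mem_verts e _ x hx
        refine ⟨heQ i (by omega), ?_⟩
        simp only [Set.mem_iInter]
        rintro j ⟨h1, h2⟩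
        exact he i (by omega) j h2 (by omega)

lemma sperner_points (n : ℕ) (hn : 1 ≤ n) (e : ℕ → E) (Q : Set E) (hQ : Convex ℝ Q)
    (P : ℕ → Set E)
    (hP : ∀ j, Convex ℝ (P j))
    (heQ : ∀ i < n, e i ∈ Q)
    (he : ∀ i < n, ∀ j < n, i ≠ j → e i ∈ P j) (l : E → ℕ)
    (hl : ∀ x ∈ Q, l x < n) (hlP : ∀ x j, x ∈ P j → l x ≠ j)
    (δ : ℝ) (hδ : 0 ≤ δ) (hd : ∀ x ∈ Q, ∀ y ∈ Q, dist x y ≤ δ) (N : ℕ) :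
    ∃ x : Fin n → E, (∀ i, x i ∈ Q ∧ l (x i) = i) ∧
      ∀ i j, dist (x i) (x j) ≤ (1 - 1 / (n : ℝ)) ^ N * δ := by
  have h1 := sperner n e Q hQ P hP heQ he l hl hlP N n le_rfl
  have hv : ∀ x ∈ verts e n, x ∈ Q := by
    intro x hx
    obtain ⟨i, hi, rfl⟩ := mem_verts e _ x hx
    exact heQ i hi
  have h2 := Sd_iter_mem_convex hQ n N (Finsupp.single (verts e n) 1)
    (single_mem ⟨verts_length e n, hv⟩)
  have h3 := Sd_iter_mesh n hn δ hδ N (Finsupp.single (verts e n) 1)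
    (single_mem ⟨verts_length e n, fun x hx y hy => hd x (hv x hx) y (hv y hy)⟩)
  have h4 := sup_and h2 h3
  by_contra hcon
  have := lin_mem (W := (⊥ : Submodule (ZMod 2) (ZMod 2)))
        (g := fun L => if ((L.map l : List ℕ) : Multiset ℕ) = Multiset.range n then 1 else 0)
        ?_ h4
  · change phi l (Multiset.range n) _ ∈ _ at this
    rw [h1] at this
    simp at this
  · rintro L ⟨⟨_, hLQ⟩, _, hLd⟩
    rw [if_neg]
    · simp
    · intro h
      apply hcon
      have hx : ∀ i : Fin n, ∃ x ∈ L, l x = i := by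
        intro i
        have : (i : ℕ) ∈ ((L.map l : List ℕ) : Multiset ℕ) := by rw [h]; simp
        rw [Multiset.mem_coe, List.mem_map] at this
        exact this
      choose x hxL hxl using hx
      exact ⟨x, fun i => ⟨hLQ _ (hxL i), hxl i⟩, fun i j => hLd _ (hxL i) _ (hxL j)⟩

end

end KKMaux

/-- Abstract fixed-point step via KKM on the `ε`-restricted simplex: if `f` is
continuous on `Mε`, maps into the unit simplex, and the sets
`A i = {m ∈ Mε : f m i ≥ m i}` satisfy the KKM face-covering condition on `Mε`
(faces where `m j = ε` for `j ∉ I` are covered by `⋃ i ∈ I, A i`), then `f`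
has a fixed point in `Mε`. -/
theorem fixed_point_on_restricted_simplex (n : ℕ) (hn : 1 ≤ n) (ε : ℝ)
    (hε : 0 < ε) (hεn : ε < 1 / n)
    (f : (Fin n → ℝ) → (Fin n → ℝ))
    (Mε : Set (Fin n → ℝ))
    (hMε : Mε = {m : Fin n → ℝ | (∀ i, ε ≤ m i) ∧ ∑ i, m i = 1})
    (hf_cont : ContinuousOn f Mε)
    (hf_simplex : ∀ m ∈ Mε, (∀ i, 0 ≤ f m i) ∧ ∑ i, f m i = 1)
    (hface : ∀ I : Finset (Fin n), I.Nonempty →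
      {m ∈ Mε | ∀ j ∉ I, m j = ε} ⊆
        ⋃ i ∈ I, {m ∈ Mε | m i ≤ f m i}) :
    ∃ m ∈ Mε, f m = m := by
  classical
  have hn0 : (0 : ℝ) < n := by exact_mod_cast hn
  have hne : (n : ℝ) * ε < 1 := by
    rw [lt_div_iff₀ hn0] at hεn; linarith
  have hmem : ∀ m, m ∈ Mε ↔ (∀ i, ε ≤ m i) ∧ ∑ i, m i = 1 := by
    intro m; rw [hMε]; rfl
  -- labels
  have hlab : ∀ x, ∃ k : ℕ, x ∈ Mε → ∃ i : Fin n, (i : ℕ) = k ∧ x i ≠ ε ∧ x i ≤ f x i := by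
    intro x
    by_cases hx : x ∈ Mε
    · have hI : (Finset.univ.filter (fun i => x i ≠ ε)).Nonempty := by
        by_contra hcon
        rw [Finset.not_nonempty_iff_eq_empty, Finset.filter_eq_empty_iff] at hcon
        have hs := ((hmem x).1 hx).2
        have : ∑ i, x i = ∑ i : Fin n, ε :=
          Finset.sum_congr rfl (fun i hi => by simpa using hcon hi)
        rw [this] at hs
        simp at hs
        linarith
      have h := hface _ hI ⟨hx, fun j hj => by simpa using hj⟩
      simp only [Set.mem_iUnion] at h
      obtain ⟨i, hi, h⟩ := h
      exact ⟨i, fun _ => ⟨i, rfl, by simpa using hi, h.2⟩⟩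
    · exact ⟨0, fun h => absurd h hx⟩
  choose l hl using hlab
  have hconv : Convex ℝ Mε := by
    intro x hx y hy a b ha hb hab
    rw [hmem] at hx hy ⊢
    refine ⟨fun i => ?_, ?_⟩
    · simp only [Pi.add_apply, Pi.smul_apply, smul_eq_mul]
      have h1 := mul_le_mul_of_nonneg_left (hx.1 i) ha
      have h2 := mul_le_mul_of_nonneg_left (hy.1 i) hb
      have : ε = a * ε + b * ε := by rw [← add_mul, hab, one_mul]
      linarith
    · simp only [Pi.add_apply, Pi.smul_apply, smul_eq_mul, Finset.sum_add_distrib,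
        ← Finset.mul_sum, hx.2, hy.2]
      linarith
  have hle1 : ∀ x ∈ Mε, ∀ i, x i ≤ 1 := by
    intro x hx i
    rw [hmem] at hx
    rw [← hx.2]
    exact Finset.single_le_sum (f := x) (fun j _ => hε.le.trans (hx.1 j)) (Finset.mem_univ i)
  have hcomp : IsCompact Mε := by
    have hsub : Mε ⊆ Set.Icc (fun _ => ε) (fun _ => 1) := by
      intro x hx
      exact ⟨fun i => ((hmem x).1 hx).1 i, fun i => hle1 x hx i⟩
    refine isCompact_Icc.of_isClosed_subset ?_ hsub
    rw [hMε]
    refine IsClosed.inter ?_ ?_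
    · have : {m : Fin n → ℝ | ∀ i, ε ≤ m i} = ⋂ i, {m : Fin n → ℝ | ε ≤ m i} := by
        ext; simp
      change IsClosed {m : Fin n → ℝ | ∀ i, ε ≤ m i}
      rw [this]
      exact isClosed_iInter fun i => isClosed_le continuous_const (continuous_apply i)
    · exact isClosed_eq (by fun_prop) continuous_const
  have he : ∀ k < n, (fun i : Fin n => if (i : ℕ) = k then 1 - ((n : ℝ) - 1) * ε else ε) ∈ Mε := by
    intro k hk
    rw [hmem]
    refine ⟨fun i => ?_, ?_⟩
    · split_ifs
      · linarith
      · exact le_rfl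
    · have : ∀ i : Fin n, (if (i : ℕ) = k then 1 - ((n : ℝ) - 1) * ε else ε) =
          ε + (if i = ⟨k, hk⟩ then 1 - (n : ℝ) * ε else 0) := by
        intro i
        by_cases h : (i : ℕ) = k
        · rw [if_pos h, if_pos (Fin.ext h)]; ring
        · rw [if_neg h, if_neg (fun h' => h (by rw [h']))]; ring
      simp only [this, Finset.sum_add_distrib]
      simp
  obtain ⟨δ, hδ⟩ := Metric.isBounded_iff.1 hcomp.isBounded
  have key := KKMaux.sperner_points n hn
    (fun k (i : Fin n) => if (i : ℕ) = k then 1 - ((n : ℝ) - 1) * ε else ε) Mε hconv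
    (fun j => {x | x ∈ Mε ∧ ∀ i : Fin n, (i : ℕ) = j → x i = ε}) ?_ ?_ ?_ l ?_ ?_
    (max δ 0) (le_max_right _ _) (fun x hx y hy => (hδ hx hy).trans (le_max_left _ _))
  rotate_left
  · intro j x hx y hy a b ha hb hab
    refine ⟨hconv hx.1 hy.1 ha hb hab, fun i hi => ?_⟩
    simp only [Pi.add_apply, Pi.smul_apply, smul_eq_mul, hx.2 i hi, hy.2 i hi]
    rw [← add_mul, hab, one_mul]
  · exact he
  · intro i hi j hj hij
    refine ⟨he i hi, fun a ha => ?_⟩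
    simp only
    rw [if_neg (by omega)]
  · intro x hx
    obtain ⟨i, hi, _⟩ := hl x hx
    rw [← hi]; exact i.2
  · rintro x j ⟨hx, hxj⟩ h
    obtain ⟨i, hi, h1, _⟩ := hl x hx
    exact h1 (hxj i (hi.trans h))
  choose x hx hxd using key
  let i0 : Fin n := ⟨0, hn⟩
  obtain ⟨m, hm, φ, hφ, hlim⟩ := hcomp.tendsto_subseq (x := fun N => x N i0)
    (fun N => (hx N i0).1)
  have hr0 : 0 ≤ 1 - 1 / (n : ℝ) := by
    have : (1 : ℝ) ≤ n := by exact_mod_cast hn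
    have : 1 / (n : ℝ) ≤ 1 := by rw [div_le_one (by linarith)]; exact this
    linarith
  have hr1 : 1 - 1 / (n : ℝ) < 1 := by
    have : 0 < 1 / (n : ℝ) := by positivity
    linarith
  have hgeo : Filter.Tendsto (fun N => (1 - 1 / (n : ℝ)) ^ (φ N) * max δ 0) Filter.atTop (nhds 0) := by
    have := ((tendsto_pow_atTop_nhds_zero_of_lt_one hr0 hr1).comp hφ.tendsto_atTop).mul_const
      (max δ 0)
    simpa using this
  have hle : ∀ i, m i ≤ f m i := by
    intro i
    have hlimi : Filter.Tendsto (fun N => x (φ N) i) Filter.atTop (nhds m) := by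
      rw [tendsto_iff_dist_tendsto_zero] at hlim ⊢
      have hsum := hgeo.add hlim
      rw [add_zero] at hsum
      refine squeeze_zero (fun _ => dist_nonneg) (fun N => ?_) hsum
      exact (dist_triangle _ (x (φ N) i0) _).trans (add_le_add (hxd _ _ _) le_rfl)
    have hf1 : Filter.Tendsto (fun N => f (x (φ N) i)) Filter.atTop (nhds (f m)) :=
      (hf_cont m hm).tendsto.comp (tendsto_nhdsWithin_iff.2
        ⟨hlimi, Filter.Eventually.of_forall fun N => (hx _ i).1⟩)
    refine le_of_tendsto_of_tendsto' (tendsto_pi_nhds.1 hlimi i) (tendsto_pi_nhds.1 hf1 i) ?_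
    intro N
    obtain ⟨j, hj, _, h2⟩ := hl _ (hx (φ N) i).1
    have : j = i := Fin.ext (hj.trans (hx (φ N) i).2)
    rw [← this]
    rw [← this] at h2
    exact h2
  refine ⟨m, hm, ?_⟩
  have hs : ∑ i, m i = ∑ i, f m i := by
    rw [((hmem m).1 hm).2, (hf_simplex m hm).2]
  have := (Finset.sum_eq_sum_iff_of_le (fun i _ => hle i)).1 hs
  funext i
  exact (this i (Finset.mem_univ i)).symm
end

section
/- Let (X, μ) be a finite nonzero measure space, n ≥ 2, and M = {m ∈ ℝⁿ : mᵢ > 0, Σmᵢ = 1}. Let c : Fin n → X → M → ℝ satisfy: (i) continuity of cᵢ(x,·) in m for each x and measurability in x for each m; (ii) for each i ≠ j and m ∈ M, μ({x : cᵢ(x,m) = cⱼ(x,m)}) = 0; (iii) for every δ > 0, sup over {x, m : mᵢ ≥ δ} of cᵢ(x,m) is finite; (iv) cᵢ(x,m) → +∞ uniformly in x as mᵢ → 0. Then there exists m* ∈ M and a measurable partition assignment I : X → Fin n with μ({x : I(x) = i}) = m*ᵢ · μ(X) for all i (normalizing μ(X)=1), cᵢ(x, m*) = min_j cⱼ(x,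 m*) for a.e. x with I(x) = i, and m*ᵢ > 0 for every i. -/
open MeasureTheory

/-- Scarf-type dominance of a finite set with respect to the rankings `r`. -/
def TDom {V I : Type*} (r : I → V → ℕ) (S : Finset V) : Prop :=
  ∀ y, ∃ i, ∀ x ∈ S, r i y ≤ r i x

theorem TDom.mono {V I : Type*} {r : I → V → ℕ} {S R : Finset V} (h : TDom r R) (hS : S ⊆ R) :
    TDom r S := fun y => (h y).imp fun _ hi x hx => hi x (hS hx)

open Classical in
theorem t_claim1 {V I : Type*} [Fintype V] [Fintype I]
    (r : I → V → ℕ) (hr : ∀ i, Function.Injective (r i)) (S : Finset V)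
    (hcard : S.card + 1 = Fintype.card I) (hne : S.Nonempty) (hS : TDom r S)
    (hP : ∀ f : I → V, (∀ i, f i ∈ S ∧ ∀ x ∈ S, r i (f i) ≤ r i x) →
      ∀ k l, k ≠ l → f k = f l → ∃ y, ∀ j ≠ k, r j (f j) < r j y) :
    (Finset.univ.filter (fun x => x ∉ S ∧ TDom r (insert x S))).card = 2 := by
  have hf0 : ∀ i, ∃ s, s ∈ S ∧ ∀ x ∈ S, r i s ≤ r i x := fun i =>
    Finset.exists_min_image S (r i) hne
  choose f hf using hf0
  have hfu : ∀ i s, s ∈ S → (∀ x ∈ S, r i s ≤ r i x) → f i = s := fun i s hs h =>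
    hr i (le_antisymm ((hf i).2 s hs) (h _ (hf i).1))
  have hsurj : ∀ s ∈ S, ∃ i, f i = s := fun s hs => (hS s).imp fun i hi => hfu i s hs hi
  obtain ⟨a, b, hab, hfab⟩ : ∃ a b, a ≠ b ∧ f a = f b := by
    obtain ⟨a, -, b, -, h1, h2⟩ := Finset.exists_ne_map_eq_of_card_lt_of_maps_to
      (s := (Finset.univ : Finset I)) (t := S) (f := f)
      (by rw [Finset.card_univ]; omega) (fun i _ => (hf i).1)
    exact ⟨a, b, h1, h2⟩
  have hinj : ∀ k, (∀ s ∈ S, ∃ j, j ≠ k ∧ f j = s) → ∀ i j, i ≠ k → j ≠ k → f i = f j → i = j := by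
    intro k hk i j hi hj hij
    have : Set.InjOn f (Finset.univ.erase k : Finset I) := by
      apply Finset.injOn_of_surjOn_of_card_le (t := S)
      · intro i _; exact (hf i).1
      · intro s hs
        obtain ⟨j, hj, rfl⟩ := hk s hs
        exact ⟨j, by simpa using hj, rfl⟩
      · rw [Finset.card_erase_of_mem (Finset.mem_univ _), Finset.card_univ]; omega
    exact this (by simpa using hi) (by simpa using hj) hij
  have hsa : ∀ s ∈ S, ∃ j, j ≠ a ∧ f j = s := by
    intro s hs
    obtain ⟨j, rfl⟩ := hsurj s hs
    by_cases h : j = a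
    · exact ⟨b, hab.symm, by rw [h, hfab]⟩
    · exact ⟨j, h, rfl⟩
  have hsb : ∀ s ∈ S, ∃ j, j ≠ b ∧ f j = s := by
    intro s hs
    obtain ⟨j, rfl⟩ := hsurj s hs
    by_cases h : j = b
    · exact ⟨a, hab, by rw [h, hfab]⟩
    · exact ⟨j, h, rfl⟩
  have hmax : ∀ k, (∃ y, ∀ j ≠ k, r j (f j) < r j y) →
      ∃ x, (∀ j ≠ k, r j (f j) < r j x) ∧ ∀ y, (∀ j ≠ k, r j (f j) < r j y) → r k y ≤ r k x := by
    rintro k ⟨y, hy⟩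
    obtain ⟨x, hx, hx2⟩ := Finset.exists_max_image
      (Finset.univ.filter (fun y => ∀ j ≠ k, r j (f j) < r j y)) (r k) ⟨y, by simpa using hy⟩
    simp only [Finset.mem_filter, Finset.mem_univ, true_and] at hx hx2
    exact ⟨x, hx, hx2⟩
  obtain ⟨xa, hxa, hxa2⟩ := hmax a (hP f hf a b hab hfab)
  obtain ⟨xb, hxb, hxb2⟩ := hmax b (hP f hf b a hab.symm hfab.symm)
  have hback : ∀ k x, (∀ s ∈ S, ∃ j, j ≠ k ∧ f j = s) → (∀ j ≠ k, r j (f j) < r j x) →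
      (∀ y, (∀ j ≠ k, r j (f j) < r j y) → r k y ≤ r k x) → x ∉ S ∧ TDom r (insert x S) := by
    intro k x hk h1 h2
    refine ⟨fun hx => ?_, fun y => ?_⟩
    · obtain ⟨j, hj, rfl⟩ := hk x hx
      exact lt_irrefl _ (h1 j hj)
    · by_cases hy : ∀ j ≠ k, r j (f j) < r j y
      · obtain ⟨l, hl⟩ := hS y
        have : l = k := by
          by_contra hlk
          exact absurd (hl _ (hf l).1) (not_le.2 (hy l hlk))
        subst this
        refine ⟨l, fun x' hx' => ?_⟩
        rcases Finset.mem_insert.1 hx' with rfl | h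
        · exact h2 y hy
        · exact hl _ h
      · push Not at hy
        obtain ⟨j, hj, hjy⟩ := hy
        refine ⟨j, fun x' hx' => ?_⟩
        rcases Finset.mem_insert.1 hx' with rfl | h
        · exact hjy.trans (h1 j hj).le
        · exact hjy.trans ((hf j).2 _ h)
  have hne2 : xa ≠ xb := by
    rintro rfl
    obtain ⟨l, hl⟩ := hS xa
    have := hl _ (hf l).1
    by_cases h : l = a
    · exact absurd this (not_le.2 (hxb l (h ▸ hab)))
    · exact absurd this (not_le.2 (hxa l h))
  rw [Finset.card_eq_two]
  refine ⟨xa, xb, hne2, ?_⟩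
  ext x
  simp only [Finset.mem_filter, Finset.mem_univ, true_and, Finset.mem_insert,
    Finset.mem_singleton]
  constructor
  · rintro ⟨hxS, hD⟩
    obtain ⟨k, hk⟩ := hD x
    have hxk : ∀ s ∈ S, r k x < r k s := fun s hs =>
      lt_of_le_of_ne (hk s (Finset.mem_insert_of_mem hs))
        (fun h => hxS ((hr k h) ▸ hs))
    have hmin : ∀ s ∈ S, ∃ j, j ≠ k ∧ f j = s ∧ r j s ≤ r j x := by
      intro s hs
      obtain ⟨j, hj⟩ := hD s
      refine ⟨j, ?_, hfu j s hs (fun x hx => hj x (Finset.mem_insert_of_mem hx)),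
        hj x (Finset.mem_insert_self _ _)⟩
      rintro rfl
      exact absurd (hj x (Finset.mem_insert_self _ _)) (not_le.2 (hxk s hs))
    have hsk : ∀ s ∈ S, ∃ j, j ≠ k ∧ f j = s := fun s hs => by
      obtain ⟨j, h1, h2, -⟩ := hmin s hs
      exact ⟨j, h1, h2⟩
    have hkP : ∀ j ≠ k, r j (f j) < r j x := by
      intro j hj
      obtain ⟨l, hl, hlj, hle⟩ := hmin (f j) (hf j).1
      have : l = j := hinj k hsk l j hl hj hlj
      subst this
      exact lt_of_le_of_ne hle (fun h => hxS (hr l h ▸ (hf l).1))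
    have hkM : ∀ y, (∀ j ≠ k, r j (f j) < r j y) → r k y ≤ r k x := by
      intro y hy
      obtain ⟨l, hl⟩ := hD y
      have : l = k := by
        by_contra hlk
        exact absurd (hl _ (Finset.mem_insert_of_mem (hf l).1)) (not_le.2 (hy l hlk))
      subst this
      exact hl _ (Finset.mem_insert_self _ _)
    by_cases hka : k = a
    · subst hka
      exact Or.inl (hr k (le_antisymm (hxa2 x hkP) (hkM xa hxa)))
    by_cases hkb : k = b
    · subst hkb
      exact Or.inr (hr k (le_antisymm (hxb2 x hkP) (hkM xb hxb)))
    exact absurd (hinj k hsk a b (Ne.symm hka) (Ne.symm hkb) hfab) hab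
  · rintro (rfl | rfl)
    · exact hback a _ hsa hxa hxa2
    · exact hback b _ hsb hxb hxb2

open Classical in
theorem t_claim2 {V I : Type*} [Fintype I] (c : V → I) (i0 : I) (R : Finset V)
    (hcard : R.card = Fintype.card I) (hR : R.image c ≠ Finset.univ) :
    Even (R.filter (fun x => (R.erase x).image c = Finset.univ.erase i0)).card := by
  rcases Finset.eq_empty_or_nonempty
    (R.filter (fun x => (R.erase x).image c = Finset.univ.erase i0)) with h | ⟨x0, h0⟩
  · rw [h]; simp
  obtain ⟨hx0, h0⟩ := Finset.mem_filter.1 h0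
  have hinj : Set.InjOn c (R.erase x0 : Finset V) := by
    rw [← Finset.card_image_iff, h0, Finset.card_erase_of_mem (Finset.mem_univ _),
      Finset.card_erase_of_mem hx0, hcard, Finset.card_univ]
  have hc0 : c x0 ≠ i0 := by
    intro h
    apply hR
    rw [← Finset.insert_erase hx0, Finset.image_insert, h0, h,
      Finset.insert_erase (Finset.mem_univ _)]
  have hm : ∀ i, i ≠ i0 → ∃ x ∈ R, x ≠ x0 ∧ c x = i := by
    intro i hi
    have : i ∈ (R.erase x0).image c := by rw [h0]; simpa using hi
    obtain ⟨x, hx, rfl⟩ := Finset.mem_image.1 this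
    exact ⟨x, Finset.mem_of_mem_erase hx, Finset.ne_of_mem_erase hx, rfl⟩
  have hn : ∀ x ∈ R, c x ≠ i0 := by
    intro x hx
    by_cases h : x = x0
    · rw [h]; exact hc0
    · have : c x ∈ (R.erase x0).image c :=
        Finset.mem_image_of_mem _ (Finset.mem_erase.2 ⟨h, hx⟩)
      rw [h0] at this
      exact Finset.ne_of_mem_erase this
  obtain ⟨x1, hx1, h10, hc1⟩ := hm (c x0) hc0
  have : R.filter (fun x => (R.erase x).image c = Finset.univ.erase i0) = {x0, x1} := by
    ext x
    simp only [Finset.mem_filter, Finset.mem_insert, Finset.mem_singleton]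
    constructor
    · rintro ⟨hx, hE⟩
      by_contra! hne
      have : c x ∈ (R.erase x).image c := by rw [hE]; simpa using hn x hx
      obtain ⟨z, hz, hzx⟩ := Finset.mem_image.1 this
      have hzR := Finset.mem_of_mem_erase hz
      have hzn := Finset.ne_of_mem_erase hz
      have hxm : x ∈ (R.erase x0 : Finset V) := Finset.mem_erase.2 ⟨hne.1, hx⟩
      by_cases hz0 : z = x0
      · subst hz0
        exact hne.2 (hinj hxm (Finset.mem_erase.2 ⟨h10, hx1⟩) (by rw [hc1, hzx]))
      · exact hzn (hinj (Finset.mem_erase.2 ⟨hz0, hzR⟩) hxm hzx)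
    · rintro (rfl | rfl)
      · exact ⟨hx0, h0⟩
      · refine ⟨hx1, ?_⟩
        ext i
        simp only [Finset.mem_image, Finset.mem_erase, Finset.mem_univ, and_true]
        constructor
        · rintro ⟨y, ⟨-, hy⟩, rfl⟩
          exact hn y hy
        · intro hi
          obtain ⟨y, hy, hy0, rfl⟩ := hm i hi
          by_cases h : y = x
          · exact ⟨x0, ⟨fun h' => h10 h'.symm, hx0⟩, by rw [h, hc1]⟩
          · exact ⟨y, ⟨h, hy⟩, rfl⟩
  rw [this, Finset.card_pair h10.symm]
  exact even_two

open Classical in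
theorem t_scarf {V I : Type*} [Fintype V] [Fintype I] (hI : 2 ≤ Fintype.card I)
    (r : I → V → ℕ) (hr : ∀ i, Function.Injective (r i)) (s : I → V) (hs : Function.Injective s)
    (h1 : ∀ i v, v ≠ s i → r i (s i) < r i v)
    (h2 : ∀ i j t, (∀ k, t ≠ s k) → j ≠ i → r i t < r i (s j))
    (t0 : V) (ht0 : ∀ k, t0 ≠ s k)
    (c : V → I) (hc : ∀ i, c (s i) = i) :
    ∃ R : Finset V, TDom r R ∧ ∀ i, ∃ v ∈ R, c v = i := by
  by_contra! hno'
  have hno : ∀ R : Finset V, TDom r R → R.image c ≠ Finset.univ := by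
    intro R hR h
    obtain ⟨i, hi⟩ := hno' R hR
    have : i ∈ R.image c := by rw [h]; exact Finset.mem_univ i
    obtain ⟨v, hv, hvi⟩ := Finset.mem_image.1 this
    exact hi v hv hvi
  obtain ⟨i0⟩ : Nonempty I := Fintype.card_pos_iff.1 (by omega)
  let D : Finset (Finset V) := Finset.univ.filter
    (fun S => S.card + 1 = Fintype.card I ∧ S.image c = Finset.univ.erase i0)
  let Ro : Finset (Finset V) := Finset.univ.filter
    (fun R => R.card = Fintype.card I ∧ TDom r R)
  have key := Finset.sum_card_bipartiteAbove_eq_sum_card_bipartiteBelow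
    (s := D) (t := Ro) (fun S R => S ⊆ R)
  have hright : Even (∑ R ∈ Ro, (D.bipartiteBelow (fun S R => S ⊆ R) R).card) := by
    apply Finset.even_sum
    intro R hR
    obtain ⟨hRc, hRD⟩ := (Finset.mem_filter.1 hR).2
    have := t_claim2 c i0 R hRc (hno R hRD)
    suffices heq : (R.filter (fun x => (R.erase x).image c = Finset.univ.erase i0)).card =
        (D.bipartiteBelow (fun S R => S ⊆ R) R).card by
      rw [← heq]; exact this
    apply Finset.card_bij (fun x _ => R.erase x)
    · intro x hx
      obtain ⟨hx, hx2⟩ := Finset.mem_filter.1 hx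
      simp only [Finset.bipartiteBelow, Finset.mem_filter, Finset.mem_univ, true_and, D]
      refine ⟨⟨?_, hx2⟩, Finset.erase_subset _ _⟩
      rw [Finset.card_erase_add_one hx, hRc]
    · intro x hx y hy hxy
      exact Finset.erase_injOn R (Finset.mem_filter.1 hx).1 (Finset.mem_filter.1 hy).1 hxy
    · intro S hS
      simp only [Finset.bipartiteBelow, Finset.mem_filter, Finset.mem_univ, true_and, D] at hS
      obtain ⟨⟨hc1, hc2⟩, hSR⟩ := hS
      obtain ⟨x, hx, rfl⟩ := Finset.exists_eq_insert_iff.2 ⟨hSR, by omega⟩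
      exact ⟨x, by simp [Finset.erase_insert hx, hc2], Finset.erase_insert hx⟩
  have hleft : ∀ S ∈ D, (Ro.bipartiteAbove (fun S R => S ⊆ R) S).card =
      (Finset.univ.filter (fun x => x ∉ S ∧ TDom r (insert x S))).card := by
    intro S hS
    obtain ⟨hSc, hSI⟩ := (Finset.mem_filter.1 hS).2
    symm
    apply Finset.card_bij (fun x _ => insert x S)
    · intro x hx
      simp only [Finset.mem_filter, Finset.mem_univ, true_and] at hx
      simp only [Finset.bipartiteAbove, Finset.mem_filter, Finset.mem_univ, true_and, Ro]
      exact ⟨⟨by rw [Finset.card_insert_of_notMem hx.1, hSc], hx.2⟩, Finset.subset_insert _ _⟩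
    · intro x hx y hy hxy
      simp only [Finset.mem_filter, Finset.mem_univ, true_and] at hx hy
      have : x ∈ insert y S := hxy ▸ Finset.mem_insert_self x S
      exact (Finset.mem_insert.1 this).resolve_right hx.1
    · intro R hR
      simp only [Finset.bipartiteAbove, Finset.mem_filter, Finset.mem_univ, true_and, Ro] at hR
      obtain ⟨⟨hc1, hc2⟩, hSR⟩ := hR
      obtain ⟨x, hx, rfl⟩ := Finset.exists_eq_insert_iff.2 ⟨hSR, by omega⟩
      exact ⟨x, by simp [hx, hc2], rfl⟩
  let S0 : Finset V := (Finset.univ.erase i0).image s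
  have hS0 : S0 ∈ D := by
    simp only [D, Finset.mem_filter, Finset.mem_univ, true_and, S0]
    refine ⟨?_, ?_⟩
    · rw [Finset.card_image_of_injective _ hs, Finset.card_erase_add_one (Finset.mem_univ _),
        Finset.card_univ]
    · rw [Finset.image_image]
      have : c ∘ s = id := funext hc
      rw [this, Finset.image_id]
  have hone : (Finset.univ.filter (fun x => x ∉ S0 ∧ TDom r (insert x S0))).card = 1 := by
    obtain ⟨x, hx, hx2⟩ := Finset.exists_max_image
      (Finset.univ.filter (fun t => ∀ k, t ≠ s k)) (r i0) ⟨t0, by simpa using ht0⟩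
    simp only [Finset.mem_filter, Finset.mem_univ, true_and] at hx hx2
    rw [Finset.card_eq_one]
    refine ⟨x, ?_⟩
    have hmemS0 : ∀ j, j ≠ i0 → s j ∈ S0 := fun j hj =>
      Finset.mem_image_of_mem _ (by simpa using hj)
    ext z
    simp only [Finset.mem_filter, Finset.mem_univ, true_and, Finset.mem_singleton]
    constructor
    · rintro ⟨hz, hzD⟩
      have hdom : ∀ y, (∀ k, y ≠ s k) → ∀ w ∈ insert z S0, r i0 y ≤ r i0 w := by
        intro y hy
        obtain ⟨i, hi⟩ := hzD y
        by_cases h : i = i0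
        · subst h; exact hi
        · exact absurd (hi _ (Finset.mem_insert_of_mem (hmemS0 i h))) (not_le.2 (h1 i y (hy i)))
      have hzs : ∀ k, z ≠ s k := by
        rintro k rfl
        by_cases h : k = i0
        · subst h
          exact absurd (hdom t0 ht0 _ (Finset.mem_insert_self _ _)) (not_le.2 (h1 k t0 (ht0 k)))
        · exact hz (hmemS0 k h)
      exact hr i0 (le_antisymm (hx2 z hzs) (hdom x hx _ (Finset.mem_insert_self _ _)))
    · rintro rfl
      refine ⟨?_, ?_⟩
      · intro h
        obtain ⟨k, -, hk⟩ := Finset.mem_image.1 h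
        exact hx k hk.symm
      · intro y
        by_cases hy : ∀ k, y ≠ s k
        · refine ⟨i0, fun w hw => ?_⟩
          rcases Finset.mem_insert.1 hw with rfl | hw
          · exact hx2 y hy
          · obtain ⟨k, hk, rfl⟩ := Finset.mem_image.1 hw
            exact (h2 i0 k y hy (by simpa using hk)).le
        · push Not at hy
          obtain ⟨k, rfl⟩ := hy
          refine ⟨k, fun w _ => ?_⟩
          by_cases h : w = s k
          · rw [h]
          · exact (h1 k w h).le
  have hother : ∀ S ∈ D.erase S0,
      Even (Ro.bipartiteAbove (fun S R => S ⊆ R) S).card := by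
    intro S hS
    obtain ⟨hSS0, hS⟩ := Finset.mem_erase.1 hS
    rw [hleft S hS]
    obtain ⟨hSc, hSI⟩ := (Finset.mem_filter.1 hS).2
    by_cases hD : TDom r S
    swap
    · rw [Finset.filter_false_of_mem]
      · simp
      · rintro x - ⟨-, h⟩
        exact hD (h.mono (Finset.subset_insert _ _))
    -- S contains a nonslack element
    obtain ⟨t, htS, ht⟩ : ∃ t ∈ S, ∀ k, t ≠ s k := by
      by_contra! hall
      apply hSS0
      apply Finset.eq_of_subset_of_card_le
      · intro x hx
        obtain ⟨k, rfl⟩ := hall x hx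
        refine Finset.mem_image_of_mem _ ?_
        rw [← hSI, ← hc k]
        exact Finset.mem_image_of_mem _ hx
      · have := (Finset.mem_filter.1 hS0).2.1
        omega
    rw [t_claim1 r hr S hSc ⟨t, htS⟩ hD]
    · exact even_two
    intro f hf k l hkl hfkl
    have hft : ∀ j, ∀ m ≠ j, f j ≠ s m := by
      intro j m hm h
      have := (hf j).2 t htS
      rw [h] at this
      exact absurd this (not_le.2 (h2 j m t ht hm))
    refine ⟨s k, fun j hj => ?_⟩
    by_cases h : f j = s j
    · rw [h]; exact h1 j _ (fun h' => hj (hs h').symm)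
    · refine h2 j k (f j) (fun m => ?_) hj.symm
      by_cases hm : m = j
      · rw [hm]; exact h
      · exact hft j m hm
  have hodd : Odd (∑ S ∈ D, (Ro.bipartiteAbove (fun S R => S ⊆ R) S).card) := by
    rw [← Finset.add_sum_erase D _ hS0, hleft S0 hS0, hone]
    exact (Finset.even_sum _ hother).one_add
  rw [key] at hodd
  exact (Nat.not_even_iff_odd.2 hodd) hright

open Classical in
theorem t_grid (n : ℕ) (hn : 2 ≤ n) (N : ℕ) (col : (Fin n → ℕ) → Fin n) :
    ∃ x0 : Fin n → ℕ, ∑ i, x0 i = N ∧ ∀ i, x0 i ≤ n ∨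
      ∃ z : Fin n → ℕ, ∑ i, z i = N ∧ col z = i ∧ ∀ j, z j ≤ x0 j + n ∧ x0 j ≤ z j + n := by
  let T := {k : Fin n → ℕ // k ∈ Finset.Nat.antidiagonalTuple n N}
  have hT : ∀ t : T, ∑ i, t.1 i = N := fun t => Finset.Nat.mem_antidiagonalTuple.1 t.2
  have hTle : ∀ (t : T) i, t.1 i ≤ N := fun t i =>
    (Finset.single_le_sum (f := t.1) (fun _ _ => Nat.zero_le _) (Finset.mem_univ i)).trans (hT t).le
  let K := Fintype.card T
  let e : T ≃ Fin K := Fintype.equivFin T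
  have hb : ∀ (t : T) i, t.1 i * K + (e t : ℕ) < N * K + K := fun t i => by
    have := Nat.mul_le_mul_right K (hTle t i)
    have := (e t).2
    omega
  have hord : ∀ (t u : T) i, t.1 i * K + (e t : ℕ) ≤ u.1 i * K + (e u : ℕ) → t.1 i ≤ u.1 i := by
    intro t u i h
    by_contra! hlt
    have h1 := Nat.mul_le_mul_right K hlt
    have := (e u).2
    rw [Nat.succ_mul] at h1
    omega
  let r : Fin n → T ⊕ Fin n → ℕ := fun i v => match v with
    | Sum.inl t => 1 + (t.1 i * K + (e t : ℕ))
    | Sum.inr j => if j = i then 0 else 1 + (N * K + K) + j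
  have hr : ∀ i, Function.Injective (r i) := by
    intro i v w h
    rcases v with t | j <;> rcases w with u | k <;> simp only [r] at h
    · have h' : t.1 i * K + (e t : ℕ) = u.1 i * K + (e u : ℕ) := by omega
      have h3 : t.1 i = u.1 i := le_antisymm (hord _ _ _ h'.le) (hord _ _ _ h'.ge)
      rw [h3] at h'
      have : e t = e u := Fin.ext (by omega)
      rw [e.injective this]
    · have := hb t i
      split_ifs at h <;> omega
    · have := hb u i
      split_ifs at h <;> omega
    · split_ifs at h with h1 h2 h2
      · rw [h1, h2]
      · omega
      · omega
      · congr 1; exact Fin.ext (by omega)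
  let i0 : Fin n := ⟨0, by omega⟩
  have t0 : T := ⟨Pi.single i0 N, by
    rw [Finset.Nat.mem_antidiagonalTuple]; simp⟩
  let c : T ⊕ Fin n → Fin n := fun v => match v with
    | Sum.inl t => col t.1
    | Sum.inr j => j
  obtain ⟨R, hRD, hRc⟩ := t_scarf (by simpa using hn) r hr Sum.inr Sum.inr_injective
    (by
      intro i v hv
      rcases v with t | j
      · simp [r]
      · have : j ≠ i := fun h => hv (by rw [h])
        simp [r, this])
    (by
      intro i j v hv hj
      rcases v with t | k
      · have := hb t i
        simp only [r, if_neg hj]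
        omega
      · exact absurd rfl (hv k))
    (Sum.inl t0) (by simp) c (by simp [c])
  let C : Finset (Fin n) := Finset.univ.filter (fun i => Sum.inr i ∉ R)
  have hcol : ∀ i ∈ C, ∃ t : T, Sum.inl t ∈ R ∧ col t.1 = i := by
    intro i hi
    have hi : Sum.inr i ∉ R := by simpa [C] using hi
    obtain ⟨v, hv, hvi⟩ := hRc i
    rcases v with t | j
    · exact ⟨t, hv, hvi⟩
    · simp only [c] at hvi
      subst hvi
      exact absurd hv hi
  have hdom : ∀ y : T, ∃ i ∈ C, ∀ t : T, Sum.inl t ∈ R → y.1 i ≤ t.1 i := by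
    intro y
    obtain ⟨i, hi⟩ := hRD (Sum.inl y)
    refine ⟨i, ?_, fun t ht => ?_⟩
    · simp only [C, Finset.mem_filter, Finset.mem_univ, true_and]
      intro h
      have := hi _ h
      simp [r] at this
    · have := hi _ ht
      simp only [r] at this
      exact hord _ _ _ (by omega)
  obtain ⟨i1, hi1, -⟩ := hdom t0
  obtain ⟨x0, hx0, -⟩ := hcol i1 hi1
  have hmin : ∀ i, ∃ a : T, Sum.inl a ∈ R ∧ ∀ t : T, Sum.inl t ∈ R → a.1 i ≤ t.1 i := by
    intro i
    obtain ⟨a, ha, ha2⟩ := Finset.exists_min_image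
      (Finset.univ.filter (fun t : T => Sum.inl t ∈ R)) (fun t => t.1 i) ⟨x0, by simpa using hx0⟩
    exact ⟨a, by simpa using ha, fun t ht => ha2 t (by simpa using ht)⟩
  choose a haR ha using hmin
  have hsum : N < ∑ i ∈ C, ((a i).1 i + 1) := by
    by_contra! hle
    let y : Fin n → ℕ := fun i => (if i ∈ C then (a i).1 i + 1 else 0) +
      (if i = i1 then N - ∑ i ∈ C, ((a i).1 i + 1) else 0)
    have hy : ∑ i, y i = N := by
      simp only [y, Finset.sum_add_distrib, Finset.sum_ite_mem, Finset.univ_inter,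
        Finset.sum_ite_eq', Finset.mem_univ, if_true]
      simp only [Finset.sum_add_distrib] at hle ⊢
      omega
    obtain ⟨i, hi, h⟩ := hdom ⟨y, Finset.Nat.mem_antidiagonalTuple.2 hy⟩
    have := h (a i) (haR i)
    simp only [y, if_pos hi] at this
    omega
  have hCn : C.card ≤ n := by simpa using Finset.card_le_univ C
  rw [Finset.sum_add_distrib] at hsum
  simp only [Finset.sum_const, smul_eq_mul, mul_one] at hsum
  have hup : ∀ t : T, Sum.inl t ∈ R → (∀ i ∈ C, t.1 i ≤ (a i).1 i + n) ∧
      (∀ i ∉ C, t.1 i ≤ n) := by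
    intro t ht
    have hN := hT t
    have hsplit : ∑ i ∈ C, t.1 i + ∑ i ∈ Cᶜ, t.1 i = N := by
      rw [Finset.sum_add_sum_compl, hN]
    constructor
    · intro i hi
      rw [← Finset.add_sum_erase C _ hi] at hsplit hsum
      have : ∑ j ∈ C.erase i, (a j).1 j ≤ ∑ j ∈ C.erase i, t.1 j :=
        Finset.sum_le_sum fun j _ => ha j t ht
      omega
    · intro i hi
      have h1 : ∑ j ∈ C, (a j).1 j ≤ ∑ j ∈ C, t.1 j :=
        Finset.sum_le_sum fun j _ => ha j t ht
      have h2 : t.1 i ≤ ∑ i ∈ Cᶜ, t.1 i :=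
        Finset.single_le_sum (f := t.1) (fun _ _ => Nat.zero_le _) (by simpa using hi)
      omega
  refine ⟨x0.1, hT x0, fun i => ?_⟩
  by_cases hi : i ∈ C
  · right
    obtain ⟨z, hz, hzi⟩ := hcol i hi
    refine ⟨z.1, hT z, hzi, fun j => ?_⟩
    by_cases hj : j ∈ C
    · have h1 := (hup z hz).1 j hj
      have h2 := (hup x0 hx0).1 j hj
      have h3 := ha j z hz
      have h4 := ha j x0 hx0
      omega
    · have h1 := (hup z hz).2 j hj
      have h2 := (hup x0 hx0).2 j hj
      omega
  · exact Or.inl ((hup x0 hx0).2 i hi)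

theorem t_kkm (n : ℕ) (hn : 2 ≤ n) (F : Fin n → Set (Fin n → ℝ)) (hF : ∀ i, IsClosed (F i))
    (hcov : ∀ x ∈ stdSimplex ℝ (Fin n), ∃ i, x ∈ F i) (δ : ℝ) (hδ : 0 < δ)
    (hbd : ∀ x ∈ stdSimplex ℝ (Fin n), ∀ i, x i ≤ δ → x ∈ F i) :
    ∃ x ∈ stdSimplex ℝ (Fin n), ∀ i, x ∈ F i := by
  classical
  have hn0 : (0:ℝ) < n := by exact_mod_cast (by omega : 0 < n)
  have step : ∀ N : ℕ, ∃ x ∈ stdSimplex ℝ (Fin n), (n:ℝ) / (N+1) ≤ δ → ∀ i,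
      ∃ y ∈ F i, dist y x ≤ n / (N+1) := by
    intro N
    let p : (Fin n → ℕ) → (Fin n → ℝ) := fun k i => (k i : ℝ) / (N+1)
    have hN : (0:ℝ) < N+1 := by positivity
    have hp : ∀ k : Fin n → ℕ, ∑ i, k i = N+1 → p k ∈ stdSimplex ℝ (Fin n) := by
      intro k hk
      refine ⟨fun i => by positivity, ?_⟩
      simp only [p]
      rw [← Finset.sum_div, div_eq_one_iff_eq hN.ne']
      exact_mod_cast hk
    have hcol : ∀ k : Fin n → ℕ, ∃ i, ∑ i, k i = N+1 → p k ∈ F i := by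
      intro k
      by_cases hk : ∑ i, k i = N+1
      · exact (hcov _ (hp k hk)).imp fun i hi _ => hi
      · exact ⟨⟨0, by omega⟩, fun h => absurd h hk⟩
    choose col hcol using hcol
    obtain ⟨x0, hx0, h⟩ := t_grid n hn (N+1) col
    refine ⟨p x0, hp x0 hx0, fun hNδ i => ?_⟩
    rcases h i with h | ⟨z, hz, rfl, hzx⟩
    · refine ⟨p x0, hbd _ (hp x0 hx0) i (le_trans ?_ hNδ), by rw [dist_self]; positivity⟩
      simp only [p]
      have : (x0 i : ℝ) ≤ n := by exact_mod_cast h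
      gcongr
    · refine ⟨p z, hcol z hz, ?_⟩
      rw [dist_pi_le_iff (by positivity)]
      intro j
      have h1 : (z j : ℝ) ≤ x0 j + n := by exact_mod_cast (hzx j).1
      have h2 : (x0 j : ℝ) ≤ z j + n := by exact_mod_cast (hzx j).2
      simp only [p]
      rw [Real.dist_eq, ← sub_div, abs_div, abs_of_pos hN]
      gcongr
      rw [abs_le]
      constructor <;> linarith
  choose x hx hxy using step
  obtain ⟨a, ha, φ, hφ, hlim⟩ := (isCompact_stdSimplex ℝ (Fin n)).tendsto_subseq hx
  refine ⟨a, ha, fun i => ?_⟩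
  have hz : Filter.Tendsto (fun N : ℕ => (n:ℝ) / (N+1)) Filter.atTop (nhds 0) :=
    tendsto_const_div_atTop_nhds_zero_nat (n:ℝ) |>.comp (Filter.tendsto_add_atTop_nat 1) |>.congr
      (fun N => by simp)
  rw [← (hF i).closure_eq, Metric.mem_closure_iff]
  intro ε hε
  have e1 : ∀ᶠ k in Filter.atTop, dist (x (φ k)) a < ε / 2 :=
    (Metric.tendsto_nhds.1 hlim) _ (by positivity)
  have e2 : ∀ᶠ k in Filter.atTop, (n:ℝ) / ((φ k : ℕ)+1) < min δ (ε/2) :=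
    (hz.comp hφ.tendsto_atTop).eventually_lt_const (by positivity)
  obtain ⟨k, h1, h2⟩ := (e1.and e2).exists
  obtain ⟨y, hy, hyd⟩ := hxy (φ k) (h2.le.trans (min_le_left _ _)) i
  refine ⟨y, hy, ?_⟩
  have h3 := h2.trans_le (min_le_right _ _)
  have := dist_triangle_left a y (x (φ k))
  rw [dist_comm y] at hyd
  linarith

/-- Main existence theorem (Theorem 1): under the hyperbola property and
small-group inefficiency there exists a Tiebout–Nash equilibrium in which all
`n` communities are nonempty: there are sizes `m* ∈ M` and a measurable
assignment `I` such that each group's realized measure equals `m* i`,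
almost every agent is assigned to a cost-minimizing community given `m*`,
and every `m* i` is positive. -/
theorem tiebout_equilibrium_exists
    {X : Type*} [MeasurableSpace X] (μ : Measure X) [IsFiniteMeasure μ]
    (hμ : μ Set.univ = 1)
    (n : ℕ) (hn : 2 ≤ n)
    (M : Set (Fin n → ℝ))
    (hM : M = {m : Fin n → ℝ | (∀ i, 0 < m i) ∧ ∑ i, m i = 1})
    (c : Fin n → X → (Fin n → ℝ) → ℝ)
    (hc_cont : ∀ i x, ContinuousOn (c i x) M)
    (hc_meas : ∀ i m, Measurable (fun x => c i x m))
    (hyperbola : ∀ i j, i ≠ j → ∀ m ∈ M, μ {x | c i x m = c j x m} = 0)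
    (hbound : ∀ δ > (0:ℝ), ∃ A : ℝ, ∀ i, ∀ x, ∀ m ∈ M, δ ≤ m i → c i x m ≤ A)
    (hsmall : ∀ A : ℝ, ∃ m₀ > (0:ℝ), ∀ i, ∀ x, ∀ m ∈ M, m i < m₀ → A < c i x m) :
    ∃ m' ∈ M, ∃ I : X → Fin n, Measurable I ∧
      (∀ i, (μ {x | I x = i}).toReal = m' i) ∧
      (∀ᵐ x ∂μ, ∀ j, c (I x) x m' ≤ c j x m') ∧
      (∀ i, 0 < m' i) := by
  classical
  have hn0 : (0:ℝ) < n := by exact_mod_cast (by omega : 0 < n)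
  haveI : Nonempty (Fin n) := ⟨⟨0, by omega⟩⟩
  -- the cost-minimizing choice with the smallest index
  have hchoice : ∀ m x, ∃ i, (∀ j, c i x m ≤ c j x m) ∧
      ∀ k, (∀ j, c k x m ≤ c j x m) → i ≤ k := by
    intro m x
    obtain ⟨i, -, hi⟩ := Finset.exists_min_image Finset.univ (fun i => c i x m)
      Finset.univ_nonempty
    obtain ⟨k, hk, hk2⟩ := Finset.exists_min_image
      (Finset.univ.filter (fun i => ∀ j, c i x m ≤ c j x m)) id ⟨i, by simpa using hi⟩
    exact ⟨k, by simpa using hk, fun l hl => hk2 l (by simpa using hl)⟩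
  choose I hI hI2 using hchoice
  have hIeq : ∀ m i, {x | I m x = i} = {x | (∀ j, c i x m ≤ c j x m) ∧
      ∀ k, k < i → ¬ (∀ j, c k x m ≤ c j x m)} := by
    intro m i
    ext x
    simp only [Set.mem_setOf_eq]
    constructor
    · rintro rfl
      exact ⟨hI m x, fun k hk h => absurd (hI2 m x k h) (not_le.2 hk)⟩
    · rintro ⟨h1, h2⟩
      refine le_antisymm (hI2 m x i h1) (not_lt.1 fun h => h2 _ h (hI m x))
  have hargm : ∀ m i, MeasurableSet {x | ∀ j, c i x m ≤ c j x m} := by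
    intro m i
    rw [Set.setOf_forall]
    exact MeasurableSet.iInter fun j => measurableSet_le (hc_meas i m) (hc_meas j m)
  have hImeas' : ∀ m i, MeasurableSet {x | I m x = i} := by
    intro m i
    rw [hIeq, Set.setOf_and]
    refine (hargm m i).inter ?_
    simp only [Set.setOf_forall]
    exact MeasurableSet.iInter fun k => MeasurableSet.iInter fun _ => (hargm m k).compl
  have hImeas : ∀ m, Measurable (I m) := fun m => measurable_to_countable' fun i => hImeas' m i
  let g : Fin n → (Fin n → ℝ) → ℝ := fun i m => (μ {x | I m x = i}).toReal
  have hgsum : ∀ m, ∑ i, g i m = 1 := by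
    intro m
    have h1 : ∑ i, μ {x | I m x = i} = μ Set.univ := by
      have := sum_measure_preimage_singleton (μ := μ) (f := I m) Finset.univ
        (fun i _ => hImeas' m i)
      rw [Finset.coe_univ, Set.preimage_univ] at this
      exact this
    simp only [g]
    rw [← ENNReal.toReal_sum (fun i _ => measure_ne_top μ _), h1, hμ, ENNReal.toReal_one]
  have hgcont : ∀ i, ContinuousOn (g i) M := by
    intro i m hm
    have hlim : Filter.Tendsto (fun m' => μ {x | I m' x = i}) (nhdsWithin m M)
        (nhds (μ {x | I m x = i})) := by
      apply tendsto_measure_of_ae_tendsto_indicator_of_isFiniteMeasure _ (hImeas' m i)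
        (fun m' => hImeas' m' i)
      have hties : ∀ᵐ x ∂μ, ∀ i j, i ≠ j → c i x m ≠ c j x m := by
        rw [ae_all_iff]; intro i
        rw [ae_all_iff]; intro j
        by_cases hij : i = j
        · exact Filter.Eventually.of_forall fun x h => absurd hij h
        · have : ∀ᵐ x ∂μ, c i x m ≠ c j x m := by
            rw [ae_iff]
            simpa using hyperbola i j hij m hm
          filter_upwards [this] with x hx _ using hx
      filter_upwards [hties] with x hx
      have hev : ∀ᶠ m' in nhdsWithin m M, ∀ j, j ≠ I m x → c (I m x) x m' < c j x m' := by
        rw [Filter.eventually_all]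
        intro j
        by_cases hj : j = I m x
        · exact Filter.Eventually.of_forall fun _ h => absurd hj h
        · have hlt : c (I m x) x m < c j x m :=
            lt_of_le_of_ne (hI m x j) (hx _ _ (Ne.symm hj))
          have := (hc_cont (I m x) x m hm).eventually_lt (hc_cont j x m hm) hlt
          filter_upwards [this] with m' h _ using h
      filter_upwards [hev] with m' h
      have : I m' x = I m x := by
        by_contra hne
        exact absurd (hI m' x (I m x)) (not_le.2 (h _ hne))
      simp only [Set.mem_setOf_eq, this]
    exact (ENNReal.tendsto_toReal (measure_ne_top μ _)).comp hlim
  obtain ⟨A, hA⟩ := hbound (1 / n) (by positivity)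
  obtain ⟨m₀, hm₀, hm₀A⟩ := hsmall A
  have hgzero : ∀ m ∈ M, ∀ i, m i < m₀ → g i m = 0 := by
    intro m hm i hi
    have hm' := hm
    rw [hM] at hm'
    obtain ⟨j, hj⟩ : ∃ j, 1 / (n:ℝ) ≤ m j := by
      by_contra! hlt
      have := Finset.sum_lt_sum_of_nonempty (s := (Finset.univ : Finset (Fin n)))
        Finset.univ_nonempty (fun j _ => hlt j)
      rw [hm'.2] at this
      simp [hn0.ne'] at this
    have : {x | I m x = i} = ∅ := by
      ext x
      simp only [Set.mem_setOf_eq, Set.mem_empty_iff_false, iff_false]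
      rintro rfl
      have h1 := hI m x j
      have h2 := hA j x m hm hj
      have h3 := hm₀A _ x m hm hi
      linarith
    simp [g, this]
  -- truncated simplex
  obtain ⟨δ, hδ, hδ1, hδ2⟩ : ∃ δ : ℝ, 0 < δ ∧ δ ≤ m₀ / 2 ∧ n * δ ≤ 1 / 2 := by
    refine ⟨min (m₀ / 2) (1 / (2 * n)), by positivity, min_le_left _ _, ?_⟩
    calc (n:ℝ) * min (m₀ / 2) (1 / (2 * n)) ≤ n * (1 / (2 * n)) := by
          gcongr; exact min_le_right _ _
      _ = 1 / 2 := by field_simp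
  let p : (Fin n → ℝ) → (Fin n → ℝ) := fun x i => δ + (1 - n * δ) * x i
  have hpM : ∀ x ∈ stdSimplex ℝ (Fin n), p x ∈ M := by
    intro x hx
    rw [hM]
    refine ⟨fun i => ?_, ?_⟩
    · have := mul_nonneg (by linarith : 0 ≤ 1 - n * δ) (hx.1 i)
      simp only [p]; linarith
    · simp only [p, Finset.sum_add_distrib, ← Finset.mul_sum, hx.2]
      simp
  have hpcont : Continuous p := by
    simp only [p]; fun_prop
  obtain ⟨x, hx, hxF⟩ := t_kkm n hn
    (fun i => {x ∈ stdSimplex ℝ (Fin n) | g i (p x) ≤ p x i})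
    (fun i => (isClosed_stdSimplex ℝ (Fin n)).isClosed_le
      ((hgcont i).comp hpcont.continuousOn hpM)
      ((continuous_apply i).comp hpcont).continuousOn)
    (by
      intro x hx
      by_contra! hno
      have hlt : ∀ i, p x i < g i (p x) := fun i => not_le.1 fun h => hno i ⟨hx, h⟩
      have := Finset.sum_lt_sum_of_nonempty (s := (Finset.univ : Finset (Fin n)))
        Finset.univ_nonempty (fun j _ => hlt j)
      have h2 := hpM x hx
      rw [hM] at h2
      rw [hgsum, h2.2] at this
      exact lt_irrefl _ this)
    (m₀ / 4) (by positivity)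
    (by
      intro x hx i hi
      refine ⟨hx, ?_⟩
      have h2 := hpM x hx
      have h3 : p x i < m₀ := by
        have h4 : (1 - n * δ) * x i ≤ 1 * x i := by
          apply mul_le_mul_of_nonneg_right _ (hx.1 i)
          have : 0 < n * δ := by positivity
          linarith
        simp only [p]; linarith
      rw [hgzero _ h2 i h3]
      rw [hM] at h2
      exact (h2.1 i).le)
  have hmem := hpM x hx
  have hmem' := hmem
  rw [hM] at hmem'
  have heq : ∀ i, g i (p x) = p x i := by
    have := (Finset.sum_eq_sum_iff_of_le (s := (Finset.univ : Finset (Fin n)))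
      (fun i _ => (hxF i).2)).1 (by rw [hgsum, hmem'.2])
    exact fun i => this i (Finset.mem_univ i)
  exact ⟨p x, hmem, I (p x), hImeas _, heq,
    Filter.Eventually.of_forall fun y j => hI _ y j, hmem'.1⟩
end

section
/- Let T = T^{α₁} × ... × T^{α_β} be a product of standard simplexes and let Γ = {(j,k) : j ∈ {1,...,β}, k ∈ {1,...,α_j + 1}} index the vertices. Suppose closed sets T^{jk} ⊆ T for (j,k) ∈ Γ satisfy ⋃_{(j,k)∈Γ} T^{jk} = T and T^{jk} ⊇ {t ∈ T : t^j_k = 0} for each (j,k). Then there exists j such that ⋂_k T^{jk} ≠ ∅. -/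
open MeasureTheory Metric Set Polynomial in
/-- Interpolation identity for `det (1 + t A)`. -/
lemma freund_aux_interp {E : Type*} [NormedAddCommGroup E] [NormedSpace ℝ E]
    [FiniteDimensional ℝ E] (v : ℕ → ℝ) (hv : Function.Injective v) :
    ∃ c : ℕ → ℝ, (∑ i ∈ Finset.range (Module.finrank ℝ E + 1), c i = 1) ∧
      ∀ A : E →L[ℝ] E, (1 + A).det =
        ∑ i ∈ Finset.range (Module.finrank ℝ E + 1), c i * (1 + v i • A).det := by
  set s := Finset.range (Module.finrank ℝ E + 1) with hs
  refine ⟨fun i => (Lagrange.basis s v i).eval 1, ?_, ?_⟩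
  · have := Lagrange.sum_basis (s := s) (v := v) hv.injOn (by simp [hs])
    have h2 := congrArg (Polynomial.eval 1) this
    simpa [Polynomial.eval_finsetSum] using h2
  · intro A
    let b := Module.finBasis ℝ E
    let M := LinearMap.toMatrix b b (A : E →ₗ[ℝ] E)
    let P : ℝ[X] := Matrix.det ((X : ℝ[X]) • M.map C + (1 : Matrix _ _ ℝ).map C)
    have hP : ∀ t : ℝ, (1 + t • A).det = P.eval t := by
      intro t
      have h1 : (1 + t • A).det = Matrix.det (1 + t • M) := by
        rw [ContinuousLinearMap.det, ← LinearMap.det_toMatrix b]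
        congr 1
        simp [M, LinearMap.toMatrix_one]
      rw [h1]
      simp only [P]
      rw [← Polynomial.coe_evalRingHom, RingHom.map_det]
      congr 1
      ext i j
      by_cases hij : i = j
      · subst hij; simp [mul_comm t]; ring
      · simp [Matrix.one_apply_ne hij, mul_comm t]
    have hdeg : P.degree < s.card := by
      refine lt_of_le_of_lt Polynomial.degree_le_natDegree ?_
      have := Polynomial.natDegree_det_X_add_C_le M 1
      simp only [Fintype.card_fin] at this
      rw [hs, Finset.card_range]
      exact_mod_cast Nat.lt_succ_of_le this
    have h := Lagrange.eq_interpolate (s := s) (v := v) hv.injOn hdeg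
    have h1 : (1 + A).det = P.eval 1 := by rw [← hP 1, one_smul]
    rw [h1]
    conv_lhs => rw [h]
    rw [Lagrange.interpolate_apply, Polynomial.eval_finsetSum]
    refine Finset.sum_congr rfl fun i _ => ?_
    simp [hP, mul_comm]

open MeasureTheory Metric Set in
lemma freund_aux_det_pos {E : Type*} [NormedAddCommGroup E] [NormedSpace ℝ E]
    [FiniteDimensional ℝ E] (A : E →L[ℝ] E) (hA : ‖A‖ < 1) : 0 < (1 + A).det := by
  have hne : ∀ s ∈ Icc (0:ℝ) 1, (1 + s • A).det ≠ 0 := by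
    intro s hs
    have hn : ‖-(s • A)‖ < 1 := by
      rw [norm_neg, norm_smul, Real.norm_of_nonneg hs.1]
      nlinarith [hs.2, norm_nonneg A, hs.1]
    have hu : IsUnit (1 + s • A) := by
      have := isUnit_one_sub_of_norm_lt_one hn
      simpa using this
    have : IsUnit ((1 + s • A : E →L[ℝ] E) : E →ₗ[ℝ] E) :=
      hu.map (ContinuousLinearMap.toLinearMapRingHom (R₁ := ℝ) (M₁ := E))
    have := this.map (LinearMap.det (M := E) (A := ℝ))
    exact this.ne_zero
  have hc : Continuous fun s : ℝ => (1 + s • A).det := by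
    exact ContinuousLinearMap.continuous_det.comp (by fun_prop)
  by_contra hneg
  push Not at hneg
  have := intermediate_value_Icc' (zero_le_one (α := ℝ)) hc.continuousOn
  have h0 : (0:ℝ) ∈ Icc ((1 + (1:ℝ) • A).det) ((1 + (0:ℝ) • A).det) := by
    simp only [one_smul, zero_smul, add_zero]
    refine ⟨hneg, ?_⟩
    have : (1 : E →L[ℝ] E).det = 1 := by simp [ContinuousLinearMap.det]
    rw [this]; exact zero_le_one
  obtain ⟨s, hs, h⟩ := this h0
  exact hne s hs h

open MeasureTheory Metric Set in
lemma freund_aux_bij {E : Type*} [NormedAddCommGroup E] [NormedSpace ℝ E]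
    [CompleteSpace E] (g : E → E) (L : NNReal) (hL : LipschitzWith L g) (h1 : L < 1) :
    Function.Bijective fun x => x + g x := by
  rcases subsingleton_or_nontrivial E with hE | hE
  · exact ⟨Function.injective_of_subsingleton _, Function.surjective_to_subsingleton _⟩
  have ha : ApproximatesLinearOn (fun x => x + g x)
      ((ContinuousLinearEquiv.refl ℝ E : E ≃L[ℝ] E) : E →L[ℝ] E) univ L := by
    rw [ApproximatesLinearOn.approximatesLinearOn_iff_lipschitzOnWith]
    have : (fun x => x + g x) - ⇑((ContinuousLinearEquiv.refl ℝ E : E ≃L[ℝ] E) : E →L[ℝ] E)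
        = g := by
      ext x; simp
    rw [this]; exact hL.lipschitzOnWith
  have hc : Subsingleton E ∨ L < ‖(((ContinuousLinearEquiv.refl ℝ E).symm : E ≃L[ℝ] E) : E →L[ℝ] E)‖₊⁻¹ := by
    right
    have : ‖(((ContinuousLinearEquiv.refl ℝ E).symm : E ≃L[ℝ] E) : E →L[ℝ] E)‖₊ = 1 := by
      have : ‖(ContinuousLinearMap.id ℝ E)‖₊ = 1 := by
        ext; simp
      simp
    rw [this]; simpa using h1
  exact ⟨fun x y hxy => ha.injOn hc (mem_univ _) (mem_univ _) hxy, ha.surjective hc⟩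

open MeasureTheory Metric Set in
lemma freund_aux_rogers {E : Type*} [NormedAddCommGroup E] [InnerProductSpace ℝ E]
    [FiniteDimensional ℝ E] [MeasurableSpace E] [BorelSpace E]
    (g : E → E) (L : NNReal) (hL : LipschitzWith L g)
    (hg0 : ∀ x ∉ ball (0:E) 1, g x = 0) (hd : ∀ x ∈ ball (0:E) 1, DifferentiableAt ℝ g x)
    (h1 : ∀ x ∈ ball (0:E) 1, ‖x + g x‖ = 1) : False := by
  let v : ℕ → ℝ := fun i => 1 / ((L + 1) * (i + 2))
  have hLp : (0:ℝ) ≤ L := L.2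
  have hvpos : ∀ i, 0 < v i := fun i => by positivity
  have hvL : ∀ i, v i * L < 1 := fun i => by
    simp only [v]
    rw [one_div_mul_eq_div, div_lt_one (by positivity)]
    have : (0:ℝ) ≤ i := Nat.cast_nonneg i
    nlinarith
  have hv : Function.Injective v := by
    intro i j hij
    simp only [v] at hij
    have hi : (0:ℝ) ≤ i := Nat.cast_nonneg i
    have hj : (0:ℝ) ≤ j := Nat.cast_nonneg j
    rw [one_div, one_div, inv_inj] at hij
    have := mul_left_cancel₀ (by positivity) hij
    exact_mod_cast (add_right_cancel this)
  obtain ⟨c, hc1, hc⟩ := freund_aux_interp (E := E) v hv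
  let μ : Measure E := volume
  have hvol0 : 0 < μ (ball (0:E) 1) := measure_ball_pos _ _ one_pos
  have hvolt : μ (ball (0:E) 1) < ⊤ := measure_ball_lt_top
  have key : ∀ i, IntegrableOn (fun x => (1 + v i • fderiv ℝ g x).det) (ball 0 1) μ ∧
      ∫ x in ball (0:E) 1, (1 + v i • fderiv ℝ g x).det ∂μ = μ.real (ball 0 1) := by
    intro i
    have hLv : LipschitzWith (Real.toNNReal (v i) * L) (fun x => v i • g x) := by
      refine LipschitzWith.of_dist_le_mul fun x y => ?_
      rw [dist_smul₀, Real.norm_of_nonneg (hvpos i).le]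
      push_cast
      rw [Real.coe_toNNReal _ (hvpos i).le, mul_assoc]
      exact mul_le_mul_of_nonneg_left (hL.dist_le_mul x y) (hvpos i).le
    have hbij := freund_aux_bij _ _ hLv (by
      rw [← NNReal.coe_lt_coe]; push_cast
      rw [Real.coe_toNNReal _ (hvpos i).le]; exact hvL i)
    have himg : (fun x => x + v i • g x) '' ball (0:E) 1 = ball 0 1 := by
      have hcomp : (fun x => x + v i • g x) '' (ball (0:E) 1)ᶜ = (ball 0 1)ᶜ := by
        have : EqOn (fun x => x + v i • g x) id (ball (0:E) 1)ᶜ := by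
          intro x hx; simp [hg0 x hx]
        rw [this.image_eq, image_id]
      rw [image_compl_eq hbij] at hcomp
      exact compl_injective hcomp
    have hder : ∀ x ∈ ball (0:E) 1, HasFDerivWithinAt (fun x => x + v i • g x)
        (1 + v i • fderiv ℝ g x) (ball 0 1) x := by
      intro x hx
      exact ((hasFDerivAt_id x).add ((hd x hx).hasFDerivAt.const_smul (v i))).hasFDerivWithinAt
    have hpos : ∀ x ∈ ball (0:E) 1, 0 < (1 + v i • fderiv ℝ g x).det := by
      intro x hx
      apply freund_aux_det_pos
      rw [norm_smul, Real.norm_of_nonneg (hvpos i).le]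
      exact lt_of_le_of_lt (mul_le_mul_of_nonneg_left (norm_fderiv_le_of_lipschitz ℝ hL)
        (hvpos i).le) (hvL i)
    have hI := integrableOn_image_iff_integrableOn_abs_det_fderiv_smul μ measurableSet_ball hder
      hbij.1.injOn (fun _ => (1:ℝ))
    have hE := integral_image_eq_integral_abs_det_fderiv_smul μ measurableSet_ball hder
      hbij.1.injOn (fun _ => (1:ℝ))
    rw [himg] at hI hE
    have heq : EqOn (fun x => |(1 + v i • fderiv ℝ g x).det| • (1:ℝ))
        (fun x => (1 + v i • fderiv ℝ g x).det) (ball 0 1) := by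
      intro x hx
      simp [abs_of_pos (hpos x hx)]
    constructor
    · have := hI.1 (integrableOn_const hvolt.ne)
      exact (integrableOn_congr_fun heq measurableSet_ball).1 this
    · rw [setIntegral_congr_fun measurableSet_ball heq] at hE
      rw [← hE]; simp
  have hz : ∀ x ∈ ball (0:E) 1, (1 + fderiv ℝ g x).det = 0 := by
    intro x hx
    by_contra hne
    have hdf : HasFDerivAt (fun x => x + g x) (1 + fderiv ℝ g x) x :=
      (hasFDerivAt_id x).add (hd x hx).hasFDerivAt
    have hsq := hdf.inner ℝ hdf
    have hconst : (fun y => inner ℝ (y + g y) (y + g y)) =ᶠ[nhds x] fun _ => (1:ℝ) := by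
      filter_upwards [isOpen_ball.mem_nhds hx] with y hy
      rw [real_inner_self_eq_norm_sq, h1 y hy]; norm_num
    have h0 := (hconst.hasFDerivAt_iff.1 hsq).unique (hasFDerivAt_const 1 x)
    have hu : IsUnit (LinearMap.det ((1 + fderiv ℝ g x : E →L[ℝ] E) : E →ₗ[ℝ] E)) :=
      isUnit_iff_ne_zero.2 hne
    obtain ⟨w, hw⟩ := (LinearMap.equivOfIsUnitDet hu).surjective (x + g x)
    have hw' : (1 + fderiv ℝ g x) w = x + g x := by
      simpa using hw
    have h2 := congrArg (fun l => l w) h0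
    simp only [ContinuousLinearMap.comp_apply, ContinuousLinearMap.prod_apply, hw',
      fderivInnerCLM_apply, real_inner_self_eq_norm_sq, h1 x hx] at h2
    norm_num at h2
  have hfin : ∫ x in ball (0:E) 1, (1 + fderiv ℝ g x).det ∂μ = μ.real (ball 0 1) := by
    rw [setIntegral_congr_fun measurableSet_ball fun x _ => hc (fderiv ℝ g x)]
    rw [integral_finsetSum _ fun i _ => (key i).1.const_mul (c i)]
    simp_rw [integral_const_mul, (key _).2]
    rw [← Finset.sum_mul, hc1, one_mul]
  rw [setIntegral_congr_fun measurableSet_ball (g := fun _ => (0:ℝ)) hz] at hfin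
  simp at hfin
  have : 0 < μ.real (ball (0:E) 1) := ENNReal.toReal_pos hvol0.ne' hvolt.ne
  exact this.ne hfin

open Metric Set in
lemma freund_aux_lip {E : Type*} [NormedAddCommGroup E] [NormedSpace ℝ E]
    (G g : E → E) (L : NNReal) (hG : LipschitzOnWith L G (closedBall 0 1))
    (hs : ∀ x ∈ sphere (0:E) 1, G x = 0) (hin : ∀ x ∈ ball (0:E) 1, g x = G x)
    (hout : ∀ x ∉ ball (0:E) 1, g x = 0) : LipschitzWith L g := by
  have mixed : ∀ x ∈ ball (0:E) 1, ∀ y ∉ ball (0:E) 1, dist (g x) (g y) ≤ L * dist x y := by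
    intro x hx y hy
    have hcont : Continuous fun s : ℝ => ‖AffineMap.lineMap x y s‖ :=
      (AffineMap.lineMap_continuous).norm
    have hiv := intermediate_value_Icc (zero_le_one (α := ℝ)) hcont.continuousOn
    have hm : (1:ℝ) ∈ Icc ‖AffineMap.lineMap x y (0:ℝ)‖ ‖AffineMap.lineMap x y (1:ℝ)‖ := by
      simp only [AffineMap.lineMap_apply_zero, AffineMap.lineMap_apply_one]
      simp at hx hy
      exact ⟨hx.le, hy⟩
    obtain ⟨s, hs1, hz⟩ := hiv hm
    set z := AffineMap.lineMap x y s with hzdef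
    have hz' : z ∈ sphere (0:E) 1 := by simpa using hz
    rw [hin x hx, hout y hy, ← hs z hz']
    refine (hG.dist_le_mul x (ball_subset_closedBall hx) z (sphere_subset_closedBall hz')).trans ?_
    refine mul_le_mul_of_nonneg_left ?_ L.2
    rw [hzdef, dist_left_lineMap, Real.norm_of_nonneg hs1.1]
    nlinarith [hs1.2, dist_nonneg (x := x) (y := y)]
  refine LipschitzWith.of_dist_le_mul fun x y => ?_
  by_cases hx : x ∈ ball (0:E) 1 <;> by_cases hy : y ∈ ball (0:E) 1
  · rw [hin x hx, hin y hy]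
    exact hG.dist_le_mul x (ball_subset_closedBall hx) y (ball_subset_closedBall hy)
  · exact mixed x hx y hy
  · rw [dist_comm, dist_comm x]; exact mixed y hy x hx
  · rw [hout x hx, hout y hy, dist_self]; positivity

open Metric Set in
lemma freund_aux_smooth {E : Type*} [NormedAddCommGroup E] [InnerProductSpace ℝ E]
    [FiniteDimensional ℝ E] (p : E → E) (hp : ContDiff ℝ 1 p)
    (hb : ∀ x ∈ closedBall (0:E) 1, ‖p x‖ ≤ 1) : ∃ x ∈ closedBall (0:E) 1, p x = x := by
  by_contra! hfix
  let _ : MeasurableSpace E := borel E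
  have _ : BorelSpace E := ⟨rfl⟩
  let u : E → E := fun x => x - p x
  let a : E → ℝ := fun x => inner ℝ x (u x)
  let D : E → ℝ := fun x => a x ^ 2 + ‖u x‖ ^ 2 * (1 - ‖x‖ ^ 2)
  let l : E → ℝ := fun x => (-a x + √(D x)) / ‖u x‖ ^ 2
  let G : E → E := fun x => l x • u x
  have hu : ContDiff ℝ 1 u := contDiff_id.sub hp
  have ha : ContDiff ℝ 1 a := contDiff_id.inner ℝ hu
  have hD : ContDiff ℝ 1 D :=
    (ha.pow 2).add ((hu.norm_sq ℝ).mul (contDiff_const.sub (contDiff_norm_sq ℝ)))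
  have hu0 : ∀ x ∈ closedBall (0:E) 1, 0 < ‖u x‖ ^ 2 := by
    intro x hx
    have : u x ≠ 0 := fun h => hfix x hx (sub_eq_zero.1 h).symm
    positivity
  have hx1 : ∀ x ∈ closedBall (0:E) 1, ‖x‖ ^ 2 ≤ 1 := by
    intro x hx
    have : ‖x‖ ≤ 1 := by simpa using hx
    nlinarith [norm_nonneg x]
  have hapos : ∀ x ∈ closedBall (0:E) 1, ‖x‖ ^ 2 = 1 → 0 < a x := by
    intro x hx h1
    have e1 : ‖u x‖ ^ 2 = ‖x‖ ^ 2 - 2 * inner ℝ x (p x) + ‖p x‖ ^ 2 := norm_sub_sq_real x (p x)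
    have e2 : a x = ‖x‖ ^ 2 - inner ℝ x (p x) := by
      simp only [a, u, inner_sub_right, real_inner_self_eq_norm_sq]
    have e3 : ‖p x‖ ^ 2 ≤ 1 := by nlinarith [norm_nonneg (p x), hb x hx]
    nlinarith [hu0 x hx]
  have hDpos : ∀ x ∈ closedBall (0:E) 1, 0 < D x := by
    intro x hx
    rcases (hx1 x hx).lt_or_eq with h | h
    · have := mul_pos (hu0 x hx) (sub_pos.2 h)
      simp only [D]; nlinarith [sq_nonneg (a x)]
    · have := hapos x hx h
      simp only [D, h, sub_self, mul_zero, add_zero]; positivity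
  have hGd : ∀ x ∈ closedBall (0:E) 1, ContDiffAt ℝ 1 G x := by
    intro x hx
    refine ContDiffAt.smul ?_ hu.contDiffAt
    refine ContDiffAt.div (ha.contDiffAt.neg.add (hD.contDiffAt.sqrt (hDpos x hx).ne'))
      (hu.norm_sq ℝ).contDiffAt (hu0 x hx).ne'
  have hGs : ∀ x ∈ sphere (0:E) 1, G x = 0 := by
    intro x hx
    have hxc := sphere_subset_closedBall hx
    have h1 : ‖x‖ ^ 2 = 1 := by
      have : ‖x‖ = 1 := by simpa using hx
      rw [this]; norm_num
    have hD1 : D x = a x ^ 2 := by simp [D, h1]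
    have : l x = 0 := by
      simp only [l, hD1, Real.sqrt_sq (hapos x hxc h1).le]; simp
    simp [G, this]
  have hGn : ∀ x ∈ closedBall (0:E) 1, ‖x + G x‖ = 1 := by
    intro x hx
    have hU := hu0 x hx
    have hl : l x * ‖u x‖ ^ 2 = -a x + √(D x) := div_mul_cancel₀ _ hU.ne'
    have hsq : √(D x) ^ 2 = D x := Real.sq_sqrt (hDpos x hx).le
    have e : ‖x + G x‖ ^ 2 = ‖x‖ ^ 2 + 2 * (l x * a x) + l x ^ 2 * ‖u x‖ ^ 2 := by
      rw [norm_add_sq_real]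
      simp only [G, inner_smul_right, norm_smul, mul_pow, Real.norm_eq_abs, sq_abs, a]
    have hDe : D x = a x ^ 2 + ‖u x‖ ^ 2 * (1 - ‖x‖ ^ 2) := rfl
    have : ‖x + G x‖ ^ 2 = 1 := by
      rw [e]
      apply mul_left_cancel₀ hU.ne'
      have h3 : (l x * ‖u x‖ ^ 2 + a x) ^ 2 = D x := by rw [hl, neg_add_cancel_comm, hsq]
      rw [hDe] at h3
      linear_combination h3
    exact (pow_eq_one_iff_of_nonneg (norm_nonneg _) two_ne_zero).1 this
  obtain ⟨L, hL⟩ : ∃ L, LipschitzOnWith L G (closedBall 0 1) := by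
    apply LocallyLipschitzOn.exists_lipschitzOnWith_of_compact (isCompact_closedBall _ _)
    intro x hx
    obtain ⟨K, s, hs, hl⟩ := (hGd x hx).exists_lipschitzOnWith
    exact ⟨K, s, mem_nhdsWithin_of_mem_nhds hs, hl⟩
  classical
  let g : E → E := fun x => if x ∈ ball (0:E) 1 then G x else 0
  have hgin : ∀ x ∈ ball (0:E) 1, g x = G x := fun x hx => if_pos hx
  have hgout : ∀ x ∉ ball (0:E) 1, g x = 0 := fun x hx => if_neg hx
  refine freund_aux_rogers g L (freund_aux_lip G g L hL hGs hgin hgout) hgout ?_ ?_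
  · intro x hx
    have h1 : DifferentiableAt ℝ G x :=
      (hGd x (ball_subset_closedBall hx)).differentiableAt one_ne_zero
    refine h1.congr_of_eventuallyEq ?_
    filter_upwards [isOpen_ball.mem_nhds hx] with y hy using hgin y hy
  · intro x hx
    rw [hgin x hx]; exact hGn x (ball_subset_closedBall hx)

open Metric Set in
lemma freund_aux_brouwer {E : Type*} [NormedAddCommGroup E] [InnerProductSpace ℝ E]
    [FiniteDimensional ℝ E] (h : E → E) (hc : Continuous h)
    (hb : ∀ x, ‖h x‖ ≤ 1) : ∃ x, h x = x := by
  by_contra! hfix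
  obtain ⟨x0, hx0, hmin⟩ := (isCompact_closedBall (0:E) 1).exists_isMinOn
    ⟨0, by simp⟩ (f := fun x => ‖h x - x‖) (by fun_prop)
  set d := ‖h x0 - x0‖ with hd
  have hdpos : 0 < d := norm_pos_iff.2 (sub_ne_zero.2 (hfix x0))
  obtain ⟨q, hq, hqd, -⟩ := hc.exists_contDiff_approx 1 (ε := fun _ => d / 3)
    continuous_const (fun _ => by positivity)
  have hpos : 0 < 1 + d / 3 := by positivity
  have hqn : ∀ x, ‖q x‖ ≤ 1 + d / 3 := by
    intro x
    have h1 := hqd x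
    rw [dist_eq_norm] at h1
    have h2 := norm_sub_norm_le (q x) (h x)
    linarith [hb x]
  obtain ⟨x, hx, hxe⟩ := freund_aux_smooth (fun x => (1 + d / 3)⁻¹ • q x)
    (contDiff_const.smul (by simpa using hq)) (by
      intro x _
      rw [norm_smul, norm_inv, Real.norm_of_nonneg hpos.le, inv_mul_le_iff₀ hpos, mul_one]
      exact hqn x)
  have hqx : q x = (1 + d / 3) • x := by
    rw [inv_smul_eq_iff₀ hpos.ne'] at hxe
    exact hxe
  have h1 := hqd x
  rw [dist_eq_norm, hqx] at h1
  have h2 : d ≤ ‖h x - x‖ := hmin hx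
  have h3 : h x - x = (d / 3) • x - ((1 + d / 3) • x - h x) := by
    rw [add_smul, one_smul]; abel
  have h4 := norm_sub_le ((d / 3) • x) ((1 + d / 3) • x - h x)
  rw [← h3, norm_smul, Real.norm_of_nonneg (by positivity)] at h4
  have h5 : ‖x‖ ≤ 1 := by simpa using hx
  nlinarith

open Metric Set in
lemma freund_aux_closed {X : Type*} [MetricSpace X] (C : Set X) (hC : IsClosed C) :
    ∃ f : X → ℝ, Continuous f ∧ (∀ x, 0 ≤ f x) ∧ ∀ x, f x = 0 ↔ x ∈ C := by
  rcases C.eq_empty_or_nonempty with rfl | hne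
  · exact ⟨fun _ => 1, continuous_const, fun _ => zero_le_one, by simp⟩
  · exact ⟨fun x => infDist x C, continuous_infDist_pt C, fun _ => infDist_nonneg,
      fun x => (hC.mem_iff_infDist_zero hne).symm⟩

/-- Brouwer for products of simplexes, in ambient form: a continuous map defined on the
whole ambient space with values in the product of simplexes has a fixed point. -/
lemma freund_aux_prod (β : ℕ) (α : Fin β → ℕ)
    (F : ((j : Fin β) → (Fin (α j + 1) → ℝ)) → ((j : Fin β) → (Fin (α j + 1) → ℝ)))
    (hF : ContinuousOn F {t | ∀ j, t j ∈ stdSimplex ℝ (Fin (α j + 1))})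
    (hm : ∀ t, (∀ j, t j ∈ stdSimplex ℝ (Fin (α j + 1))) →
      ∀ j, F t j ∈ stdSimplex ℝ (Fin (α j + 1))) :
    ∃ t, (∀ j, t j ∈ stdSimplex ℝ (Fin (α j + 1))) ∧ F t = t := by
  let I := (j : Fin β) × Fin (α j + 1)
  let V := EuclideanSpace ℝ I
  let N : ℝ := Fintype.card I + 1
  have hN : 0 < N := by positivity
  -- scaled decoding
  let dec : V → ((j : Fin β) → (Fin (α j + 1) → ℝ)) := fun x j k => max 0 (N * x ⟨j, k⟩)
  let S : V → Fin β → ℝ := fun x j => ∑ k, dec x j k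
  let r : V → ((j : Fin β) → (Fin (α j + 1) → ℝ)) := fun x j k =>
    (dec x j k + max 0 (1 - S x j) / (α j + 1)) / max 1 (S x j)
  have hdec : ∀ j k, Continuous fun x => dec x j k := fun j k => by
    exact continuous_const.max (continuous_const.mul ((continuous_apply (⟨j, k⟩ : I)).comp
      (PiLp.continuous_ofLp 2 _)))
  have hS : ∀ j, Continuous fun x => S x j := fun j => continuous_finsetSum _ fun k _ => hdec j k
  have hr : Continuous r := by
    refine continuous_pi fun j => continuous_pi fun k => ?_
    refine Continuous.div ((hdec j k).add ((continuous_const.max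
      (continuous_const.sub (hS j))).div_const _)) (continuous_const.max (hS j)) ?_
    intro x
    exact (lt_of_lt_of_le one_pos (le_max_left _ _)).ne'
  have hrT : ∀ x j, r x j ∈ stdSimplex ℝ (Fin (α j + 1)) := by
    intro x j
    have hp : 0 < max 1 (S x j) := lt_of_lt_of_le one_pos (le_max_left _ _)
    refine ⟨fun k => ?_, ?_⟩
    · refine div_nonneg (add_nonneg (le_max_left _ _) (div_nonneg (le_max_left _ _) ?_)) hp.le
      positivity
    · simp only [r]
      rw [← Finset.sum_div, Finset.sum_add_distrib, div_eq_one_iff_eq hp.ne']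
      have : ∑ k, dec x j k = S x j := rfl
      rw [this, Finset.sum_const, Finset.card_univ, Fintype.card_fin, nsmul_eq_mul]
      push_cast
      rw [mul_div_cancel₀ _ (by positivity)]
      rcases le_total (S x j) 1 with h | h
      · rw [max_eq_left h, max_eq_right (by linarith)]; ring
      · rw [max_eq_right h, max_eq_left (by linarith)]; ring
  let enc : ((j : Fin β) → (Fin (α j + 1) → ℝ)) → V := fun t =>
    WithLp.toLp 2 fun i => t i.1 i.2 / N
  have henc : Continuous enc := by
    refine (PiLp.continuous_toLp 2 _).comp ?_
    fun_prop
  have hret : ∀ t, (∀ j, t j ∈ stdSimplex ℝ (Fin (α j + 1))) → r (enc t) = t := by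
    intro t ht
    have hd : dec (enc t) = t := by
      ext j k
      simp only [dec, enc]
      rw [mul_div_cancel₀ _ hN.ne', max_eq_right ((ht j).1 k)]
    have hS1 : ∀ j, S (enc t) j = 1 := fun j => by
      simp only [S, hd]; exact (ht j).2
    ext j k
    simp [r, hd, hS1]
  have hcont : Continuous fun x => enc (F (r x)) :=
    henc.comp (hF.comp_continuous hr fun x => hrT x)
  obtain ⟨x, hx⟩ := freund_aux_brouwer (fun x => enc (F (r x))) hcont (by
    intro x
    have hT := hm _ (hrT x)
    rw [← sq_le_one_iff₀ (norm_nonneg _), EuclideanSpace.norm_sq_eq]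
    have hle : ∀ i : I, ‖(enc (F (r x))) i‖ ^ 2 ≤ 1 / N := by
      intro i
      have h0 := (hT i.1).1 i.2
      have h1 : F (r x) i.1 i.2 ≤ 1 := by
        rw [← (hT i.1).2]
        exact Finset.single_le_sum (fun k _ => (hT i.1).1 k) (Finset.mem_univ _)
      have hN1 : 1 ≤ N := by simp [N]
      simp only [enc]
      rw [Real.norm_of_nonneg (by positivity), div_pow, div_le_div_iff₀ (by positivity) hN]
      have h2 : F (r x) i.1 i.2 ^ 2 ≤ 1 := pow_le_one₀ h0 h1
      calc F (r x) i.1 i.2 ^ 2 * N ≤ 1 * N := mul_le_mul_of_nonneg_right h2 hN.le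
        _ ≤ 1 * N ^ 2 := by nlinarith
    refine (Finset.sum_le_sum fun i _ => hle i).trans ?_
    rw [Finset.sum_const, Finset.card_univ, nsmul_eq_mul, mul_one_div, div_le_one hN]
    simp [N])
  refine ⟨F (r x), hm _ (hrT x), ?_⟩
  have := hret _ (hm _ (hrT x))
  rw [hx] at this
  exact congrArg F this.symm

open Fin.NatCast in
lemma freund_aux_cyclic {n : ℕ} (P : Fin (n + 1) → Prop) (k : Fin (n + 1)) (hk : P k)
    (hs : ∀ i, P i → P (i + 1)) (i : Fin (n + 1)) : P i := by
  have hall : ∀ m : ℕ, P (k + (m : Fin (n + 1))) := by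
    intro m
    induction m with
    | zero => simpa using hk
    | succ m ih =>
      rw [Nat.cast_succ, ← add_assoc]; exact hs _ ih
  have h := hall (i - k : Fin (n + 1)).val
  rw [Fin.cast_val_eq_self] at h
  simpa using h

/-- Freund's dual covering lemma for simplotopes: let `T` be a product of `β`
standard simplexes (the `j`-th of dimension `α j`, with `α j + 1` vertices).
If closed sets `C j k` cover `T` and each `C j k` contains the facet
`{t ∈ T : t j k = 0}`, then for some factor `j` the sets `C j k`, over all
vertices `k` of that factor, have a common point. -/
theorem freund_dual_covering_lemma (β : ℕ) (hβ : 0 < β) (α : Fin β → ℕ)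
    (T : Set ((j : Fin β) → (Fin (α j + 1) → ℝ)))
    (hT : T = {t | ∀ j, t j ∈ stdSimplex ℝ (Fin (α j + 1))})
    (C : (j : Fin β) → Fin (α j + 1) → Set ((j : Fin β) → (Fin (α j + 1) → ℝ)))
    (hclosed : ∀ j k, IsClosed (C j k))
    (hcover : (⋃ j, ⋃ k, C j k) = T)
    (hfacet : ∀ j k, {t ∈ T | t j k = 0} ⊆ C j k) :
    ∃ j, (⋂ k, C j k).Nonempty := by
  by_contra! hne
  choose f hfc hf0 hfC using fun j k => freund_aux_closed (C j k) (hclosed j k)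
  have hsum : ∀ j t, 0 < ∑ k, f j k t := by
    intro j t
    refine lt_of_le_of_ne (Finset.sum_nonneg fun k _ => hf0 j k t) fun h => ?_
    have h2 := (Finset.sum_eq_zero_iff_of_nonneg fun k _ => hf0 j k t).1 h.symm
    have : t ∈ ⋂ k, C j k :=
      Set.mem_iInter.2 fun k => (hfC j k t).1 (h2 k (Finset.mem_univ _))
    rw [hne j] at this
    exact this
  let F : ((j : Fin β) → (Fin (α j + 1) → ℝ)) → ((j : Fin β) → (Fin (α j + 1) → ℝ)) :=
    fun t j k => f j (k - 1) t / ∑ i, f j i t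
  have hF : Continuous F := by
    refine continuous_pi fun j => continuous_pi fun k => ?_
    exact (hfc j _).div (continuous_finsetSum _ fun i _ => hfc j i) fun t => (hsum j t).ne'
  obtain ⟨t, ht, hfix⟩ := freund_aux_prod β α F hF.continuousOn (by
    intro t _ j
    refine ⟨fun k => div_nonneg (hf0 _ _ _) (hsum j t).le, ?_⟩
    simp only [F]
    rw [← Finset.sum_div, div_eq_one_iff_eq (hsum j t).ne']
    exact Equiv.sum_comp (Equiv.subRight (1 : Fin (α j + 1))) fun i => f j i t)
  have htT : t ∈ T := by rw [hT]; exact ht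
  have hstep : ∀ j k, f j k t = 0 → t j (k + 1) = 0 := by
    intro j k h
    rw [← hfix]
    simp [F, h]
  obtain ⟨j, hj⟩ := Set.mem_iUnion.1 (hcover ▸ htT : t ∈ ⋃ j, ⋃ k, C j k)
  obtain ⟨k, hk⟩ := Set.mem_iUnion.1 hj
  have := hsum j t
  refine this.ne' (Finset.sum_eq_zero fun i _ => ?_)
  refine freund_aux_cyclic (fun i => f j i t = 0) k ((hfC j k t).2 hk) (fun i hi => ?_) i
  exact (hfC j _ t).2 (hfacet j _ ⟨htT, hstep j _ hi⟩)
end
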